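/- arXiv:1303.2713 — 3 statements merged into one kernel-verified Lean document; each statement's English description precedes it below -/
import Mathlib

section
/- For the focusing ground state $\phi_\mu$ one has $\int_0^1 \phi_\mu(x)^2\,dx = 8 K(k)\big(E(k) - (1-k^2)K(k)\big)$, where $k=k(\mu)\in[0,1)$ is the unique solution of $\mu = 4(2k^2-1)K(k)^2$ and $K, E$ are the complete elliptic integrals of the first and second kind. -/
open Set

/-- Complete elliptic integral of the first kind. -/
noncomputable def ellK (k : ℝ) : ℝ :=
  ∫ θ in (0:ℝ)..(Real.pi / 2), 1 / Real.sqrt (1 - k ^ 2 * Real.sin θ ^ 2)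

/-- Complete elliptic integral of the second kind. -/
noncomputable def ellE (k : ℝ) : ℝ :=
  ∫ θ in (0:ℝ)..(Real.pi / 2), Real.sqrt (1 - k ^ 2 * Real.sin θ ^ 2)

/-- The focusing ground state predicate. -/
def IsGroundState (μ : ℝ) (φ : ℝ → ℝ) : Prop :=
  ∃ φ' φ'' φ''' : ℝ → ℝ,
    (∀ x ∈ Set.Icc (0:ℝ) 1, HasDerivAt φ (φ' x) x ∧ HasDerivAt φ' (φ'' x) x ∧
      HasDerivAt φ'' (φ''' x) x) ∧
    ContinuousOn φ''' (Set.Icc 0 1) ∧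
    φ 0 = 0 ∧ φ 1 = 0 ∧
    (∀ x ∈ Set.Ioo (0:ℝ) 1, 0 < φ x) ∧
    (∀ x ∈ Set.Icc (0:ℝ) 1, φ'' x + φ x ^ 3 = μ * φ x)


lemma aux_const (f : ℝ → ℝ) (h : ∀ x ∈ Set.Icc (0:ℝ) 1, HasDerivAt f 0 x) :
    ∀ x ∈ Set.Icc (0:ℝ) 1, f x = f 0 :=
  constant_of_has_deriv_right_zero (fun x hx => (h x hx).continuousAt.continuousWithinAt)
    (fun x hx => (h x (Set.Ico_subset_Icc_self hx)).hasDerivWithinAt)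

lemma aux_pos (t : ℝ) (h1 : t < 1) (h0 : 0 ≤ t) (s : ℝ) (hs : s ^ 2 ≤ 1) :
    0 < 1 - t * s ^ 2 := by nlinarith [sq_nonneg s]

lemma aux_contK (k : ℝ) (hk : k ^ 2 < 1) :
    Continuous fun θ : ℝ => 1 / Real.sqrt (1 - k ^ 2 * Real.sin θ ^ 2) := by
  refine Continuous.div continuous_const (by fun_prop) fun θ => ?_
  exact (Real.sqrt_pos.2 (aux_pos _ hk (sq_nonneg k) _ (Real.sin_sq_le_one θ))).ne'

lemma aux_Kpos (k : ℝ) (hk : k ^ 2 < 1) : 0 < ellK k := by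
  unfold ellK
  refine intervalIntegral.intervalIntegral_pos_of_pos_on
    ((aux_contK k hk).intervalIntegrable _ _) (fun θ _ => ?_) (by positivity)
  have := Real.sqrt_pos.2 (aux_pos _ hk (sq_nonneg k) _ (Real.sin_sq_le_one θ))
  positivity

lemma aux_Kmono (a b : ℝ) (hab : a ^ 2 ≤ b ^ 2) (hb : b ^ 2 < 1) : ellK a ≤ ellK b := by
  unfold ellK
  refine intervalIntegral.integral_mono_on (by positivity)
    ((aux_contK a (by linarith)).intervalIntegrable _ _)
    ((aux_contK b hb).intervalIntegrable _ _) (fun θ _ => ?_)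
  have := aux_pos _ hb (sq_nonneg b) _ (Real.sin_sq_le_one θ)
  apply one_div_le_one_div_of_le (Real.sqrt_pos.2 this)
  apply Real.sqrt_le_sqrt
  nlinarith [sq_nonneg (Real.sin θ)]

lemma aux_Kupper (a b : ℝ) (hab : a ^ 2 ≤ b ^ 2) (hb : b ^ 2 < 1) :
    ellK b ≤ Real.sqrt ((1 - a ^ 2) / (1 - b ^ 2)) * ellK a := by
  unfold ellK
  rw [← intervalIntegral.integral_const_mul]
  refine intervalIntegral.integral_mono_on (by positivity)
    ((aux_contK b hb).intervalIntegrable _ _)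
    (((aux_contK a (by linarith)).const_mul _).intervalIntegrable _ _) (fun θ _ => ?_)
  have h1 := aux_pos _ hb (sq_nonneg b) _ (Real.sin_sq_le_one θ)
  have h2 := aux_pos (a ^ 2) (by linarith) (sq_nonneg a) _ (Real.sin_sq_le_one θ)
  have h3 : 0 < 1 - b ^ 2 := by linarith
  have h4 : 0 < 1 - a ^ 2 := by linarith
  rw [mul_one_div, ← Real.sqrt_div (by positivity), ← Real.sqrt_one, ← Real.sqrt_div (by positivity)]
  apply Real.sqrt_le_sqrt
  rw [Real.sqrt_one, div_div, div_le_div_iff₀ h1 (by positivity)]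
  have := Real.sin_sq_le_one θ
  nlinarith [mul_nonneg (sub_nonneg.2 hab) (sub_nonneg.2 this)]

lemma aux_lt (a b : ℝ) (hab : a ^ 2 < b ^ 2) (hb : b ^ 2 < 1) :
    (2 * a ^ 2 - 1) * ellK a ^ 2 < (2 * b ^ 2 - 1) * ellK b ^ 2 := by
  have Ka := aux_Kpos a (by linarith)
  have Kb := aux_Kpos b hb
  have hm := aux_Kmono a b hab.le hb
  have hm2 : ellK a ^ 2 ≤ ellK b ^ 2 := by gcongr
  have Ka2 : 0 < ellK a ^ 2 := by positivity
  have Kb2 : 0 < ellK b ^ 2 := by positivity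
  rcases le_or_gt (1/2) (b ^ 2) with h | h
  · have h5 : (2 * a ^ 2 - 1) * ellK a ^ 2 < (2 * b ^ 2 - 1) * ellK a ^ 2 := by
      apply mul_lt_mul_of_pos_right _ Ka2; linarith
    have h6 : (2 * b ^ 2 - 1) * ellK a ^ 2 ≤ (2 * b ^ 2 - 1) * ellK b ^ 2 := by
      apply mul_le_mul_of_nonneg_left hm2; linarith
    linarith
  · have hu := aux_Kupper a b hab.le hb
    have h3 : 0 < 1 - b ^ 2 := by linarith
    have h4 : 0 < 1 - a ^ 2 := by linarith
    have hu2 : ellK b ^ 2 ≤ (1 - a ^ 2) / (1 - b ^ 2) * ellK a ^ 2 := by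
      calc ellK b ^ 2 ≤ (Real.sqrt ((1 - a ^ 2) / (1 - b ^ 2)) * ellK a) ^ 2 := by gcongr
        _ = _ := by rw [mul_pow, Real.sq_sqrt (by positivity)]
    have h5 : (1 - 2 * b ^ 2) * ellK b ^ 2
        ≤ (1 - 2 * b ^ 2) * ((1 - a ^ 2) / (1 - b ^ 2) * ellK a ^ 2) :=
      mul_le_mul_of_nonneg_left hu2 (by linarith)
    have h6 : (1 - 2 * b ^ 2) * ((1 - a ^ 2) / (1 - b ^ 2)) < 1 - 2 * a ^ 2 := by
      rw [← mul_div_assoc, div_lt_iff₀ h3]; nlinarith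
    have h7 := mul_lt_mul_of_pos_right h6 Ka2
    nlinarith

lemma aux_inj (a b : ℝ) (ha0 : 0 ≤ a) (hb0 : 0 ≤ b) (ha : a ^ 2 < 1) (hb : b ^ 2 < 1)
    (h : (2 * a ^ 2 - 1) * ellK a ^ 2 = (2 * b ^ 2 - 1) * ellK b ^ 2) : a = b := by
  rcases lt_trichotomy (a ^ 2) (b ^ 2) with h1 | h1 | h1
  · exact absurd h (aux_lt a b h1 hb).ne
  · exact (sq_eq_sq₀ ha0 hb0).1 h1
  · exact absurd h (aux_lt b a h1 ha).ne'

lemma aux_sym (F : ℝ → ℝ) (hF : Continuous fun s => F (Real.cos s ^ 2)) :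
    ∫ s in (0:ℝ)..Real.pi, F (Real.cos s ^ 2)
      = 2 * ∫ s in (0:ℝ)..(Real.pi / 2), F (Real.sin s ^ 2) := by
  rw [← intervalIntegral.integral_add_adjacent_intervals (b := Real.pi / 2)
    (hF.intervalIntegrable _ _) (hF.intervalIntegrable _ _)]
  have h1 : ∫ s in (0:ℝ)..(Real.pi / 2), F (Real.sin s ^ 2)
      = ∫ s in (0:ℝ)..(Real.pi / 2), F (Real.cos s ^ 2) := by
    have := intervalIntegral.integral_comp_sub_left (a := 0) (b := Real.pi / 2)
      (fun s => F (Real.cos s ^ 2)) (Real.pi / 2)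
    simpa [Real.cos_pi_div_two_sub] using this
  have h2 : ∫ s in (0:ℝ)..(Real.pi / 2), F (Real.sin s ^ 2)
      = ∫ s in (Real.pi / 2)..Real.pi, F (Real.cos s ^ 2) := by
    have := intervalIntegral.integral_comp_add_right (a := 0) (b := Real.pi / 2)
      (fun s => F (Real.cos s ^ 2)) (Real.pi / 2)
    simpa [Real.cos_add_pi_div_two] using this
  rw [← h1, ← h2]; ring

lemma aux_sym2 (m : ℝ) (hm : m ^ 2 < 1) :
    ∫ s in (0:ℝ)..Real.pi, 1 / Real.sqrt (1 - m ^ 2 * Real.cos s ^ 2) = 2 * ellK m := by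
  refine aux_sym (fun c => 1 / Real.sqrt (1 - m ^ 2 * c)) ?_
  refine Continuous.div continuous_const (by fun_prop) fun θ => ?_
  exact (Real.sqrt_pos.2 (aux_pos _ hm (sq_nonneg m) _ (Real.cos_sq_le_one θ))).ne'

lemma aux_sym3 (m : ℝ) (hm : m ^ 2 < 1) :
    ∫ s in (0:ℝ)..Real.pi, m ^ 2 * Real.sin s ^ 2 / Real.sqrt (1 - m ^ 2 * Real.cos s ^ 2)
      = 2 * (ellE m - (1 - m ^ 2) * ellK m) := by
  have h := aux_sym (fun c => m ^ 2 * (1 - c) / Real.sqrt (1 - m ^ 2 * c)) (by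
    refine Continuous.div (by fun_prop) (by fun_prop) fun θ => ?_
    exact (Real.sqrt_pos.2 (aux_pos _ hm (sq_nonneg m) _ (Real.cos_sq_le_one θ))).ne')
  simp only [Real.sin_sq] at h ⊢
  rw [h]
  unfold ellE ellK
  rw [← intervalIntegral.integral_const_mul (1 - m ^ 2), ← intervalIntegral.integral_sub]
  · congr 1
    apply intervalIntegral.integral_congr
    intro θ _
    have hp := aux_pos _ hm (sq_nonneg m) _ (Real.sin_sq_le_one θ)
    have h1 := Real.sqrt_pos.2 hp
    have h2 := Real.sq_sqrt hp.le
    simp only [← Real.sin_sq]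
    field_simp
    rw [h2]; ring
  · apply Continuous.intervalIntegrable; fun_prop
  · exact ((aux_contK m hm).const_mul _).intervalIntegrable _ _

/-- `∫₀¹ φ_μ² = 8 K(k) (E(k) - (1-k²) K(k))` where `k ∈ [0,1)` solves
`μ = 4 (2k² - 1) K(k)²`. -/
theorem stmt_3 (μ k : ℝ) (hμ : -Real.pi ^ 2 < μ) (hk : k ∈ Set.Ico (0:ℝ) 1)
    (hkμ : μ = 4 * (2 * k ^ 2 - 1) * ellK k ^ 2)
    (φ : ℝ → ℝ) (hφ : IsGroundState μ φ) :
    ∫ x in (0:ℝ)..1, φ x ^ 2 = 8 * ellK k * (ellE k - (1 - k ^ 2) * ellK k) := by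
  obtain ⟨p, q, r, hd, -, h0, h1, hpos, hode⟩ := hφ
  have z0 : (0:ℝ) ∈ Set.Icc (0:ℝ) 1 := by simp
  have z1 : (1:ℝ) ∈ Set.Icc (0:ℝ) 1 := by simp
  -- energy
  have hE : ∀ x ∈ Set.Icc (0:ℝ) 1, p x ^ 2 - μ * φ x ^ 2 + φ x ^ 4 / 2 = p 0 ^ 2 := by
    intro x hx
    have := aux_const (fun x => p x ^ 2 - μ * φ x ^ 2 + φ x ^ 4 / 2) (fun x hx => by
      obtain ⟨d1, d2, -⟩ := hd x hx
      have := ((d2.pow 2).sub ((d1.pow 2).const_mul μ)).add ((d1.pow 4).div_const 2)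
      refine HasDerivAt.congr_deriv this ?_
      have := hode x hx
      have hq : q x = μ * φ x - φ x ^ 3 := by linarith
      simp [hq]; ring) x hx
    simp only [this, h0]; ring
  -- nonvanishing slope
  have hp0 : p 0 ≠ 0 := by
    intro hz
    have hle : ∀ x ∈ Set.Ico (0:ℝ) 1, ‖p x‖ ≤ Real.sqrt |μ| * ‖φ x‖ + 0 := by
      intro x hx
      have e := hE x (Set.Ico_subset_Icc_self hx)
      rw [hz] at e
      rw [add_zero, Real.norm_eq_abs, Real.norm_eq_abs]
      refine abs_le_of_sq_le_sq ?_ (by positivity)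
      rw [mul_pow, Real.sq_sqrt (abs_nonneg _), sq_abs]
      have : μ * φ x ^ 2 ≤ |μ| * φ x ^ 2 :=
        mul_le_mul_of_nonneg_right (le_abs_self _) (sq_nonneg _)
      nlinarith [sq_nonneg (φ x ^ 2)]
    have := norm_le_gronwallBound_of_norm_deriv_right_le (f := φ) (f' := p) (δ := 0)
      (fun x hx => (hd x hx).1.continuousAt.continuousWithinAt)
      (fun x hx => (hd x (Set.Ico_subset_Icc_self hx)).1.hasDerivWithinAt)
      (by simp [h0]) hle (1/2) (by norm_num)
    rw [gronwallBound_ε0_δ0] at this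
    have h3 := hpos (1/2) (by norm_num)
    have : φ (1/2) = 0 := norm_le_zero_iff.1 this
    linarith
  have hp0' : 0 < p 0 := by
    refine lt_of_le_of_ne ?_ hp0.symm
    by_contra hneg
    push Not at hneg
    have hs := (hd 0 z0).1.hasDerivWithinAt (s := Set.Ioi 0)
    rw [hasDerivWithinAt_iff_tendsto_slope' (by simp)] at hs
    have e1 := hs.eventually (gt_mem_nhds hneg)
    have e2 : ∀ᶠ x in nhdsWithin (0:ℝ) (Set.Ioi 0), x ∈ Set.Ioo (0:ℝ) 1 :=
      Ioo_mem_nhdsGT (by norm_num)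
    obtain ⟨x, hx1, hx2⟩ := (e1.and e2).exists
    rw [slope_def_field, h0] at hx1
    have := hpos x hx2
    have : 0 < (φ x - 0) / (x - 0) := by
      simp only [sub_zero]; exact div_pos this hx2.1
    linarith
  -- parameters
  obtain ⟨W, hW, hWe⟩ : ∃ W : ℝ, 0 < W ∧ W ^ 2 = μ ^ 2 + 2 * p 0 ^ 2 :=
    ⟨Real.sqrt (μ ^ 2 + 2 * p 0 ^ 2), by positivity, Real.sq_sqrt (by positivity)⟩
  have hpsq : 0 < p 0 ^ 2 := by positivity
  have hWμ : |μ| < W := abs_lt_of_sq_lt_sq (by linarith) hW.le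
  obtain ⟨hW1, hW2⟩ := abs_lt.1 hWμ
  obtain ⟨A, hA, hAe⟩ : ∃ A : ℝ, 0 < A ∧ A ^ 2 = W + μ :=
    ⟨Real.sqrt (W + μ), Real.sqrt_pos.2 (by linarith), Real.sq_sqrt (by linarith)⟩
  obtain ⟨ω, hω, hωe⟩ : ∃ ω : ℝ, 0 < ω ∧ ω ^ 2 = W :=
    ⟨Real.sqrt W, Real.sqrt_pos.2 hW, Real.sq_sqrt hW.le⟩
  obtain ⟨m, hm, hme⟩ : ∃ m : ℝ, 0 ≤ m ∧ m ^ 2 = (W + μ) / (2 * W) :=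
    ⟨Real.sqrt ((W + μ) / (2 * W)), Real.sqrt_nonneg _,
      Real.sq_sqrt (div_nonneg (by linarith) (by linarith))⟩
  have hmW : 2 * W * m ^ 2 = W + μ := by rw [hme]; field_simp
  have hm1 : m ^ 2 < 1 := by rw [hme, div_lt_one (by linarith)]; linarith
  set g : ℝ → ℝ := fun x => Real.sqrt ((W - μ + φ x ^ 2) / 2) with hg
  have gin : ∀ x, 0 < (W - μ + φ x ^ 2) / 2 := fun x => by nlinarith [sq_nonneg (φ x)]
  have gpos : ∀ x, 0 < g x := fun x => Real.sqrt_pos.2 (gin x)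
  have gsq : ∀ x, g x ^ 2 = (W - μ + φ x ^ 2) / 2 := fun x => Real.sq_sqrt (gin x).le
  have gcont : ContinuousOn g (Set.Icc 0 1) := by
    have : ContinuousOn φ (Set.Icc 0 1) := fun x hx => (hd x hx).1.continuousAt.continuousWithinAt
    exact (((continuousOn_const.add (this.pow 2)).div_const 2)).sqrt
  have hfac : ∀ x ∈ Set.Icc (0:ℝ) 1, p x ^ 2 = (A ^ 2 - φ x ^ 2) * g x ^ 2 := by
    intro x hx
    have := hE x hx
    rw [gsq, hAe]; nlinarith
  -- phase
  set G : ℝ → ℝ := Set.IccExtend (zero_le_one (α := ℝ)) ((Set.Icc (0:ℝ) 1).domRestrict g) with hG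
  have Gcont : Continuous G := Continuous.Icc_extend' (continuousOn_iff_continuous_domRestrict.1 gcont)
  have Gg : ∀ x ∈ Set.Icc (0:ℝ) 1, G x = g x := fun x hx => by
    rw [hG, Set.IccExtend_of_mem _ _ hx]; rfl
  have Gpos : ∀ x, 0 < G x := fun x => gpos _
  set T : ℝ → ℝ := fun x => ∫ t in (0:ℝ)..x, G t with hT
  have Td : ∀ x, HasDerivAt T (G x) x := fun x =>
    intervalIntegral.integral_hasDerivAt_right (Gcont.intervalIntegrable _ _)
      (Gcont.stronglyMeasurableAtFilter _ _) Gcont.continuousAt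
  have T0 : T 0 = 0 := by simp [hT]
  have Tmono : StrictMono T := strictMono_of_deriv_pos fun x => by rw [(Td x).deriv]; exact Gpos x
  have Tcont : Continuous T := continuous_iff_continuousAt.2 fun x => (Td x).continuousAt
  set w : ℝ → ℝ := fun x => p x / g x with hw
  have wd : ∀ x ∈ Set.Icc (0:ℝ) 1, HasDerivAt w (-(φ x * g x)) x := by
    intro x hx
    obtain ⟨d1, d2, -⟩ := hd x hx
    have dg : HasDerivAt g (φ x * p x / (2 * g x)) x := by
      have := (((d1.pow 2).const_add (W - μ)).div_const 2).sqrt (gin x).ne'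
      refine HasDerivAt.congr_deriv this ?_
      change (2:ℕ) * φ x ^ (2 - 1) * p x / 2 / (2 * g x) = _
      norm_num
      ring
    refine HasDerivAt.congr_deriv (d2.div dg (gpos x).ne') ?_
    symm
    have hq : q x = μ * φ x - φ x ^ 3 := by linarith [hode x hx]
    have hgx := (gpos x).ne'
    have e : p x * (φ x * p x / (2 * g x)) = φ x * (A ^ 2 - φ x ^ 2) / 2 * g x := by
      field_simp
      rw [hfac x hx]; ring
    rw [e, hq, eq_div_iff (by positivity)]
    have hg2 := gsq x
    have : (μ * φ x - φ x ^ 3) - φ x * (A ^ 2 - φ x ^ 2) / 2 = - φ x * g x ^ 2 := by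
      rw [hg2, hAe]; ring
    linear_combination (-g x) * this
  have ud : ∀ x ∈ Set.Icc (0:ℝ) 1, HasDerivAt φ (w x * g x) x := by
    intro x hx
    have := (hd x hx).1
    rwa [hw, div_mul_cancel₀ _ (gpos x).ne']
  have w0 : w 0 = A := by
    have h2 : w 0 ^ 2 = A ^ 2 := by
      rw [hw, div_pow, hfac 0 z0, h0]
      have := (gpos 0).ne'
      field_simp; ring
    exact (sq_eq_sq₀ (div_pos hp0' (gpos 0)).le hA.le).1 h2
  have c1 : ∀ x ∈ Set.Icc (0:ℝ) 1, φ x * Real.cos (T x) - w x * Real.sin (T x) = 0 := by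
    intro x hx
    have := aux_const (fun x => φ x * Real.cos (T x) - w x * Real.sin (T x)) (fun x hx => by
      have := ((ud x hx).mul (Td x).cos).sub ((wd x hx).mul (Td x).sin)
      refine HasDerivAt.congr_deriv this ?_
      rw [Gg x hx]; ring) x hx
    simpa [h0, T0] using this
  have c2 : ∀ x ∈ Set.Icc (0:ℝ) 1, φ x * Real.sin (T x) + w x * Real.cos (T x) = A := by
    intro x hx
    have := aux_const (fun x => φ x * Real.sin (T x) + w x * Real.cos (T x)) (fun x hx => by
      have := ((ud x hx).mul (Td x).sin).add ((wd x hx).mul (Td x).cos)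
      refine HasDerivAt.congr_deriv this ?_
      rw [Gg x hx]; ring) x hx
    simpa [h0, T0, w0] using this
  have hsin : ∀ x ∈ Set.Icc (0:ℝ) 1, φ x = A * Real.sin (T x) := by
    intro x hx
    linear_combination Real.cos (T x) * c1 x hx + Real.sin (T x) * c2 x hx
      - φ x * Real.sin_sq_add_cos_sq (T x)
  have T1pos : 0 < T 1 := by rw [← T0]; exact Tmono (by norm_num)
  have T1s : Real.sin (T 1) = 0 := by
    have := hsin 1 z1
    rw [h1] at this
    exact (mul_eq_zero.1 this.symm).resolve_left hA.ne'
  have T1 : T 1 = Real.pi := by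
    apply le_antisymm
    · by_contra hlt
      push Not at hlt
      obtain ⟨x, hx, hxe⟩ := intermediate_value_Ioo (zero_le_one (α := ℝ)) Tcont.continuousOn
        (show Real.pi ∈ Set.Ioo (T 0) (T 1) from ⟨by rw [T0]; exact Real.pi_pos, hlt⟩)
      have h3 := hpos x hx
      rw [hsin x (Set.Ioo_subset_Icc_self hx), hxe] at h3
      simp at h3
    · by_contra hlt
      push Not at hlt
      exact (Real.sin_pos_of_pos_of_lt_pi T1pos hlt).ne' T1s
  have GT : ∀ x ∈ Set.Icc (0:ℝ) 1, G x = ω * Real.sqrt (1 - m ^ 2 * Real.cos (T x) ^ 2) := by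
    intro x hx
    rw [Gg x hx, hg, ← Real.sqrt_sq hω.le, ← Real.sqrt_mul (by positivity)]
    simp only
    congr 1
    rw [hsin x hx, mul_pow, hAe, hωe, Real.sin_sq]
    linear_combination (Real.cos (T x) ^ 2 / 2) * hmW
  have sp : ∀ s, 0 < Real.sqrt (1 - m ^ 2 * Real.cos s ^ 2) := fun s =>
    Real.sqrt_pos.2 (aux_pos _ hm1 (sq_nonneg m) _ (Real.cos_sq_le_one s))
  have I1 : ω = 2 * ellK m := by
    have h := intervalIntegral.integral_comp_mul_deriv (a := 0) (b := 1) (f := T) (f' := G)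
      (g := fun s => 1 / Real.sqrt (1 - m ^ 2 * Real.cos s ^ 2))
      (fun x _ => Td x) Gcont.continuousOn
      (Continuous.div continuous_const (by fun_prop) fun s => (sp s).ne')
    rw [T0, T1, aux_sym2 m hm1] at h
    rw [← h]
    have : ∀ x ∈ Set.uIcc (0:ℝ) 1,
        ((fun s => 1 / Real.sqrt (1 - m ^ 2 * Real.cos s ^ 2)) ∘ T) x * G x = ω := by
      intro x hx
      rw [Set.uIcc_of_le zero_le_one] at hx
      rw [GT x hx]
      have := (sp (T x)).ne'
      simp only [Function.comp]
      field_simp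
    rw [intervalIntegral.integral_congr this]
    simp
  have I2 : ∫ x in (0:ℝ)..1, φ x ^ 2 = 4 * ω * (ellE m - (1 - m ^ 2) * ellK m) := by
    have h := intervalIntegral.integral_comp_mul_deriv (a := 0) (b := 1) (f := T) (f' := G)
      (g := fun s => m ^ 2 * Real.sin s ^ 2 / Real.sqrt (1 - m ^ 2 * Real.cos s ^ 2))
      (fun x _ => Td x) Gcont.continuousOn
      (Continuous.div (by fun_prop) (by fun_prop) fun s => (sp s).ne')
    rw [T0, T1, aux_sym3 m hm1] at h
    have h' : 4 * ω * (ellE m - (1 - m ^ 2) * ellK m)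
      = 2 * ω * (2 * (ellE m - (1 - m ^ 2) * ellK m)) := by ring
    rw [h', ← h, ← intervalIntegral.integral_const_mul]
    apply intervalIntegral.integral_congr
    intro x hx
    rw [Set.uIcc_of_le zero_le_one] at hx
    have := (sp (T x)).ne'
    simp only [Function.comp]
    rw [GT x hx, hsin x hx, mul_pow, hAe, ← hmW, ← hωe]
    field_simp
  have hμm : μ = 4 * (2 * m ^ 2 - 1) * ellK m ^ 2 := by
    have : W = 4 * ellK m ^ 2 := by rw [← hωe, I1]; ring
    linear_combination (2 * m ^ 2 - 1) * this - hmW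
  have hkm : k = m := aux_inj k m hk.1 hm (by nlinarith [hk.1, hk.2]) hm1 (by linarith)
  rw [hkm, I2, I1]; ring
end

section
/- Let $T>0$, $N\in\mathbb{N}$, and let $(\omega_k)_{k\geq 1}$ be an increasing sequence of positive reals with $\omega_{k+1}-\omega_k\to+\infty$. Then there exists a continuous linear map $L : \mathbb{R}^N\times\ell^2(\mathbb{N}^*,\mathbb{C}) \to L^2((0,T),\mathbb{R})$ such that for all data $(\tilde d, d)$, the function $v = L(\tilde d,d)$ satisfies the moment equations $\int_0^T v(t)e^{i\omega_k t}dt = d_k$ for all $k\geq 1$ and $\int_0^T t^k v(t)dt = \tilde d_{k+1}$ for $k=0,\dots,N-1$. -/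
open MeasureTheory Set Filter

theorem riesz_right_inverse {ι H : Type*} [NormedAddCommGroup H] [InnerProductSpace ℂ H]
    [CompleteSpace H] (e : ι → H) (c C : ℝ) (hc : 0 < c)
    (hlow : ∀ (F : Finset ι) (a : ι → ℂ), c * ∑ i ∈ F, ‖a i‖ ^ 2 ≤ ‖∑ i ∈ F, a i • e i‖ ^ 2)
    (hup : ∀ (F : Finset ι) (a : ι → ℂ), ‖∑ i ∈ F, a i • e i‖ ^ 2 ≤ C * ∑ i ∈ F, ‖a i‖ ^ 2) :
    ∃ L : lp (fun _ : ι => ℂ) 2 →L[ℂ] H, ∀ d i, inner ℂ (e i) (L d) = d i := by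
  classical
  have h2 : (0:ℝ) < (2 : ENNReal).toReal := by norm_num
  have hsq : ∀ x : lp (fun _ : ι => ℂ) 2, HasSum (fun i => ‖x i‖ ^ 2) (‖x‖ ^ 2) := by
    intro x
    have := lp.hasSum_norm h2 x
    simpa using this
  have hsum : ∀ x : lp (fun _ : ι => ℂ) 2, Summable (fun i => x i • e i) := by
    intro x
    rw [summable_iff_vanishing_norm]
    intro ε hε
    have hs := (hsq x).summable
    rw [summable_iff_vanishing_norm] at hs
    obtain ⟨s, hs⟩ := hs (ε ^ 2 / (|C| + 1)) (by positivity)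
    refine ⟨s, fun t ht => ?_⟩
    have h1 := hs t ht
    have h3 := hup t (fun i => x i)
    have h4 : (0:ℝ) ≤ ∑ i ∈ t, ‖x i‖ ^ 2 := by positivity
    rw [Real.norm_of_nonneg h4, lt_div_iff₀ (by positivity)] at h1
    have h5 : ‖∑ i ∈ t, x i • e i‖ ^ 2 < ε ^ 2 := by
      nlinarith [le_abs_self C]
    exact lt_of_pow_lt_pow_left₀ 2 hε.le h5
  have hlim : ∀ x : lp (fun _ : ι => ℂ) 2, Tendsto (fun F : Finset ι => ‖∑ i ∈ F, x i • e i‖ ^ 2)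
      atTop (nhds (‖∑' i, x i • e i‖ ^ 2)) := fun x => ((hsum x).hasSum.norm).pow 2
  have hub : ∀ x : lp (fun _ : ι => ℂ) 2, ‖∑' i, x i • e i‖ ^ 2 ≤ C * ‖x‖ ^ 2 := fun x =>
    le_of_tendsto_of_tendsto' (hlim x) ((hsq x).const_mul C)
      (fun F => hup F _)
  have hlb : ∀ x : lp (fun _ : ι => ℂ) 2, c * ‖x‖ ^ 2 ≤ ‖∑' i, x i • e i‖ ^ 2 := fun x =>
    le_of_tendsto_of_tendsto' ((hsq x).const_mul c) (hlim x)
      (fun F => hlow F _)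
  let U0 : lp (fun _ : ι => ℂ) 2 →ₗ[ℂ] H :=
    { toFun := fun x => ∑' i, x i • e i
      map_add' := fun x y => by
        rw [← (hsum x).tsum_add (hsum y)]
        simp [add_smul]
      map_smul' := fun r x => by
        simp only [RingHom.id_apply]
        rw [← (hsum x).tsum_const_smul]
        simp [mul_smul] }
  let U : lp (fun _ : ι => ℂ) 2 →L[ℂ] H := U0.mkContinuous (Real.sqrt |C|) (fun x => by
    have h := hub x
    refine le_of_sq_le_sq ?_ (by positivity)
    rw [mul_pow, Real.sq_sqrt (abs_nonneg C)]
    refine h.trans ?_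
    gcongr
    exact le_abs_self C)
  have hU : ∀ x, U x = ∑' i, x i • e i := fun x => rfl
  let G := (ContinuousLinearMap.adjoint U) ∘L U
  have hG : ∀ x y, inner ℂ (G x) y = inner ℂ (U x) (U y) := fun x y =>
    ContinuousLinearMap.adjoint_inner_left U y (U x)
  have hGb : ∀ x, c * ‖x‖ ≤ ‖G x‖ := by
    intro x
    rcases eq_or_ne x 0 with rfl | hx
    · simp
    have h1 : ‖U x‖ ^ 2 ≤ ‖G x‖ * ‖x‖ := by
      have := norm_inner_le_norm (𝕜 := ℂ) (G x) x
      rw [hG, inner_self_eq_norm_sq_to_K] at this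
      simpa using this
    have h2 := (hlb x).trans h1
    have hx' : 0 < ‖x‖ := norm_pos_iff.2 hx
    nlinarith
  have hanti : AntilipschitzWith (c⁻¹).toNNReal G := by
    refine ContinuousLinearMap.antilipschitz_of_bound G ?_
    intro x
    rw [Real.coe_toNNReal _ (by positivity), ← div_eq_inv_mul, le_div_iff₀ hc, mul_comm]
    exact hGb x
  have hker : G.ker = ⊥ := by
    rw [LinearMap.ker_eq_bot]
    exact hanti.injective
  have hcl : IsClosed (G.range : Set (lp (fun _ : ι => ℂ) 2)) :=
    hanti.isClosed_range G.uniformContinuous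
  have hrange : G.range = ⊤ := by
    have := hcl.completeSpace_coe
    rw [← G.range.orthogonal_orthogonal, Submodule.eq_top_iff']
    intro v w hw
    have : inner ℂ (G w) w = 0 := hw _ ⟨w, rfl⟩
    rw [hG, inner_self_eq_zero] at this
    have h3 := hlb w
    rw [← hU, this] at h3
    have : w = 0 := by
      rw [← norm_eq_zero]
      have : ‖w‖ ^ 2 ≤ 0 := by
        by_contra hh
        push Not at hh
        have := mul_pos hc hh
        simp at h3
        linarith
      exact pow_eq_zero_iff (two_ne_zero) |>.1 (le_antisymm this (by positivity))
    rw [this]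
    exact inner_zero_left _
  let E := ContinuousLinearEquiv.ofBijective G hker hrange
  refine ⟨U ∘L (E.symm : lp (fun _ : ι => ℂ) 2 →L[ℂ] lp (fun _ : ι => ℂ) 2), fun d i => ?_⟩
  have h1 : U (lp.single 2 i (1:ℂ)) = e i := by
    rw [hU, tsum_eq_single i]
    · simp
    · intro j hj
      simp [hj]
  have h2 : G (E.symm d) = d := ContinuousLinearEquiv.ofBijective_apply_symm_apply G hker hrange d
  have h3 := hG (E.symm d) (lp.single 2 i (1:ℂ))
  rw [h2, h1, lp.inner_single_right] at h3
  rw [← inner_conj_symm]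
  simp only [ContinuousLinearMap.comp_apply, ContinuousLinearEquiv.coe_coe]
  rw [← h3]
  simp

noncomputable def ex (μ t : ℝ) : ℂ := Complex.exp (Complex.I * μ * t)

theorem ex_cont (μ : ℝ) : Continuous (ex μ) := by
  unfold ex; fun_prop

theorem norm_ex (μ t : ℝ) : ‖ex μ t‖ = 1 := by
  unfold ex
  rw [Complex.norm_exp]
  simp

theorem ex_mul_conj (x y t : ℝ) : ex x t * (starRingEnd ℂ) (ex y t) = ex (x - y) t := by
  unfold ex
  rw [← Complex.exp_conj, ← Complex.exp_add]
  congr 1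
  simp
  ring

theorem ex_zero (t : ℝ) : ex 0 t = 1 := by simp [ex]

theorem ex_add (x t s : ℝ) : ex x (t + s) = ex x t * ex x s := by
  unfold ex
  rw [← Complex.exp_add]
  congr 1
  push_cast
  ring

theorem hasDerivAt_ex (μ t : ℝ) : HasDerivAt (ex μ) (Complex.I * μ * ex μ t) t := by
  unfold ex
  have h1 : HasDerivAt (fun t : ℝ => Complex.I * μ * (t : ℂ)) (Complex.I * μ) t := by
    simpa using (Complex.ofRealCLM.hasDerivAt (x := t)).const_mul (Complex.I * (μ:ℂ))
  have := h1.cexp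
  convert this using 1
  ring

theorem norm_ex_sub_le (μ a b : ℝ) (hab : a ≤ b) : ‖ex μ b - ex μ a‖ ≤ |μ| * (b - a) := by
  have h := norm_image_sub_le_of_norm_deriv_le_segment' (f := ex μ)
    (f' := fun t => Complex.I * μ * ex μ t) (C := |μ|) (a := a) (b := b)
    (fun t _ => (hasDerivAt_ex μ t).hasDerivWithinAt)
    (fun t _ => by simp [norm_ex]) b ⟨hab, le_rfl⟩
  exact h

theorem kernel_bound (a b μ : ℝ) (hab : a ≤ b) (hμ : μ ≠ 0) :
    ‖∫ t in a..b, (((t - a) * (b - t) : ℝ) : ℂ) * ex μ t‖ ≤ 4 * (b - a) / μ ^ 2 := by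
  have hc : (Complex.I * μ : ℂ) ≠ 0 := by simp [hμ]
  set z : ℂ := Complex.I * μ with hz
  have hofReal : ∀ t : ℝ, HasDerivAt (fun t : ℝ => (t : ℂ)) 1 t := fun t =>
    Complex.ofRealCLM.hasDerivAt (x := t)
  have hd : ∀ t : ℝ, HasDerivAt (fun t : ℝ =>
      (((t : ℂ) - a) * (b - t) / z - (a + b - 2 * t) / z ^ 2 + (-2) / z ^ 3) * ex μ t)
      ((((t - a) * (b - t) : ℝ) : ℂ) * ex μ t) t := by
    intro t
    have h1 : HasDerivAt (fun t : ℝ => ((t : ℂ) - a) * (b - t)) (1 * (b - t) + (t - a) * (0 - 1)) t := 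
      ((hofReal t).sub_const (a:ℂ)).mul ((hasDerivAt_const t (b:ℂ)).sub (hofReal t))
    have h2 : HasDerivAt (fun t : ℝ => (a + b - 2 * t : ℂ)) (0 - 2 * 1) t :=
      (hasDerivAt_const t (a + b : ℂ)).sub ((hofReal t).const_mul 2)
    have h3 := (((h1.div_const z).sub (h2.div_const (z^2))).add_const ((-2) / z ^ 3)).mul
      (hasDerivAt_ex μ t)
    refine HasDerivAt.congr_deriv h3 ?_
    rw [← hz]
    simp only [Pi.sub_apply]
    push_cast
    field_simp
    ring
  rw [intervalIntegral.integral_eq_sub_of_hasDerivAt (fun t _ => hd t)]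
  · have : ((((b : ℂ) - a) * (b - b) / z - (a + b - 2 * b) / z ^ 2 + (-2) / z ^ 3) * ex μ b) -
      ((((a : ℂ) - a) * (b - a) / z - (a + b - 2 * a) / z ^ 2 + (-2) / z ^ 3) * ex μ a)
      = ((b - a : ℝ) : ℂ) / z ^ 2 * ex μ b + ((b - a : ℝ) : ℂ) / z ^ 2 * ex μ a
        - 2 / z ^ 3 * (ex μ b - ex μ a) := by
      push_cast
      ring
    rw [this]
    have hnz : ‖z‖ = |μ| := by simp [hz]
    have hm : 0 < |μ| := abs_pos.2 hμ
    have e1 : ∀ s, ‖((b - a : ℝ) : ℂ) / z ^ 2 * ex μ s‖ = (b - a) / μ ^ 2 := by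
      intro s
      rw [norm_mul, norm_ex, norm_div, norm_pow, hnz, sq_abs, Complex.norm_real,
        Real.norm_of_nonneg (by linarith), mul_one]
    have e2 : ‖2 / z ^ 3 * (ex μ b - ex μ a)‖ ≤ 2 * (b - a) / μ ^ 2 := by
      rw [norm_mul, norm_div, norm_pow, hnz, ← sq_abs μ]
      calc ‖(2:ℂ)‖ / |μ| ^ 3 * ‖ex μ b - ex μ a‖ ≤ ‖(2:ℂ)‖ / |μ| ^ 3 * (|μ| * (b - a)) := by
            gcongr
            exact norm_ex_sub_le μ a b hab
        _ = 2 * (b - a) / |μ| ^ 2 := by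
            simp only [RCLike.norm_ofNat]
            field_simp
    calc _ ≤ (b - a) / μ ^ 2 + (b - a) / μ ^ 2 + 2 * (b - a) / μ ^ 2 := by
            refine (norm_sub_le _ _).trans (add_le_add ((norm_add_le _ _).trans ?_) e2)
            rw [e1, e1]
      _ = _ := by ring
  · apply Continuous.intervalIntegrable
    have := ex_cont μ
    fun_prop

theorem kernel_diag (a b : ℝ) : ∫ t in a..b, (t - a) * (b - t) = (b - a) ^ 3 / 6 := by
  have hd : ∀ t : ℝ, HasDerivAt (fun t : ℝ => (b - a) * (t - a) ^ 2 / 2 - (t - a) ^ 3 / 3)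
      ((t - a) * (b - t)) t := by
    intro t
    have h0 := (hasDerivAt_id t).sub_const a
    have h := (((h0.pow 2).const_mul (b - a)).div_const 2).sub ((h0.pow 3).div_const 3)
    refine HasDerivAt.congr_deriv h ?_
    simp
    ring
  rw [intervalIntegral.integral_eq_sub_of_hasDerivAt (fun t _ => hd t)]
  · ring
  · apply Continuous.intervalIntegrable
    fun_prop

noncomputable def tri (lam : ℤ → ℝ) (F : Finset ℤ) (a : ℤ → ℂ) (t : ℝ) : ℂ :=
  ∑ k ∈ F, a k * ex (lam k) t

theorem tri_cont (lam : ℤ → ℝ) (F : Finset ℤ) (a : ℤ → ℂ) : Continuous (tri lam F a) := by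
  unfold tri
  have := fun k => ex_cont (lam k)
  fun_prop

noncomputable def Zc : ℝ := ∑' m : ℤ, 1 / (m : ℝ) ^ 2

theorem sum_Z (F : Finset ℤ) (j : ℤ) : ∑ k ∈ F, 1 / ((j : ℝ) - k) ^ 2 ≤ Zc := by
  have hs : Summable (fun m : ℤ => 1 / (m : ℝ) ^ 2) := Real.summable_one_div_int_pow.2 (by norm_num)
  have h1 : ∑ k ∈ F, 1 / ((j : ℝ) - k) ^ 2 = ∑ m ∈ F.image (fun k => j - k), 1 / (m : ℝ) ^ 2 := by
    rw [Finset.sum_image]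
    · push_cast; rfl
    · intro x _ y _ h
      simpa using h
  rw [h1]
  exact hs.sum_le_tsum _ (fun i _ => by positivity)

theorem Zc_nonneg : 0 ≤ Zc := tsum_nonneg (fun i => by positivity)

theorem gram_bound (lam : ℤ → ℝ) (F : Finset ℤ) (c : ℤ → ℂ) (γ a b : ℝ) (hγ : 0 < γ) (hab : a ≤ b)
    (hgap : ∀ j ∈ F, ∀ k ∈ F, j ≠ k → γ * |(j : ℝ) - k| ≤ |lam j - lam k|) :
    |(∫ t in a..b, ((t - a) * (b - t)) * ‖tri lam F c t‖ ^ 2) - (b - a) ^ 3 / 6 * ∑ k ∈ F, ‖c k‖ ^ 2|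
      ≤ 4 * (b - a) / γ ^ 2 * Zc * ∑ k ∈ F, ‖c k‖ ^ 2 := by
  set A : ℤ → ℤ → ℂ := fun j k => ∫ t in a..b, (((t - a) * (b - t) : ℝ) : ℂ) * ex (lam j - lam k) t
    with hA
  have hexp : (((∫ t in a..b, ((t - a) * (b - t)) * ‖tri lam F c t‖ ^ 2) : ℝ) : ℂ)
      = ∑ j ∈ F, ∑ k ∈ F, c j * (starRingEnd ℂ) (c k) * A j k := by
    rw [← intervalIntegral.integral_ofReal]
    have : ∀ t : ℝ, (((t - a) * (b - t) * ‖tri lam F c t‖ ^ 2 : ℝ) : ℂ)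
        = ∑ j ∈ F, ∑ k ∈ F, c j * (starRingEnd ℂ) (c k) *
          ((((t - a) * (b - t) : ℝ) : ℂ) * ex (lam j - lam k) t) := by
      intro t
      rw [Complex.ofReal_mul, Complex.ofReal_pow, ← Complex.mul_conj']
      unfold tri
      rw [map_sum, Finset.sum_mul_sum, Finset.mul_sum]
      refine Finset.sum_congr rfl fun j _ => ?_
      rw [Finset.mul_sum]
      refine Finset.sum_congr rfl fun k _ => ?_
      rw [map_mul, ← ex_mul_conj]
      ring
    simp_rw [this]
    have hcont : ∀ j k, Continuous (fun t : ℝ => c j * (starRingEnd ℂ) (c k) *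
          ((((t - a) * (b - t) : ℝ) : ℂ) * ex (lam j - lam k) t)) := by
      intro j k
      have := ex_cont (lam j - lam k)
      fun_prop
    rw [intervalIntegral.integral_finsetSum]
    · refine Finset.sum_congr rfl fun j _ => ?_
      rw [intervalIntegral.integral_finsetSum]
      · refine Finset.sum_congr rfl fun k _ => ?_
        rw [intervalIntegral.integral_const_mul]
      · intro k _
        exact (hcont j k).intervalIntegrable _ _
    · intro j _
      exact (continuous_finsetSum _ fun k _ => hcont j k).intervalIntegrable _ _
  have hAd : ∀ j, A j j = (((b - a) ^ 3 / 6 : ℝ) : ℂ) := by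
    intro j
    simp only [hA, sub_self, ex_zero, mul_one]
    rw [intervalIntegral.integral_ofReal, kernel_diag]
  have hAo : ∀ j ∈ F, ∀ k ∈ F, j ≠ k → ‖A j k‖ ≤ 4 * (b - a) / γ ^ 2 * (1 / ((j:ℝ) - k) ^ 2) := by
    intro j hj k hk hjk
    have h1 := hgap j hj k hk hjk
    have h2 : 0 < |(j:ℝ) - k| := abs_pos.2 (sub_ne_zero.2 (by exact_mod_cast hjk))
    have h3 : lam j - lam k ≠ 0 := by
      rw [← abs_pos]; exact lt_of_lt_of_le (by positivity) h1
    refine (kernel_bound a b _ hab h3).trans ?_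
    have h4 : γ ^ 2 * ((j:ℝ) - k) ^ 2 ≤ (lam j - lam k) ^ 2 := by
      rw [← sq_abs ((j:ℝ) - k), ← sq_abs (lam j - lam k), ← mul_pow]
      gcongr
    have h5 : 0 < ((j:ℝ) - k) ^ 2 := by rw [← sq_abs]; positivity
    calc 4 * (b - a) / (lam j - lam k) ^ 2 ≤ 4 * (b - a) / (γ ^ 2 * ((j:ℝ) - k) ^ 2) := by
          have : 0 ≤ 4 * (b - a) := by linarith
          gcongr
      _ = _ := by field_simp
  set M := 4 * (b - a) / γ ^ 2 with hM
  have hM0 : 0 ≤ M := by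
    have : 0 ≤ b - a := by linarith
    positivity
  have hterm : ∀ j ∈ F, ∀ k ∈ F,
      ‖c j * (starRingEnd ℂ) (c k) * A j k - (if j = k then (((b - a) ^ 3 / 6 * ‖c j‖ ^ 2 : ℝ) : ℂ) else 0)‖
      ≤ M / 2 * (1 / ((j:ℝ) - k) ^ 2) * (‖c j‖ ^ 2 + ‖c k‖ ^ 2) := by
    intro j hj k hk
    by_cases hjk : j = k
    · subst hjk
      rw [hAd, Complex.mul_conj']
      simp [mul_comm]
    · simp only [hjk, if_false, sub_zero, norm_mul, RCLike.norm_conj]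
      have h1 := hAo j hj k hk hjk
      have h2 : ‖c j‖ * ‖c k‖ ≤ (‖c j‖ ^ 2 + ‖c k‖ ^ 2) / 2 := by nlinarith [sq_nonneg (‖c j‖ - ‖c k‖)]
      calc ‖c j‖ * ‖c k‖ * ‖A j k‖ ≤ ((‖c j‖ ^ 2 + ‖c k‖ ^ 2) / 2) * (M * (1 / ((j:ℝ) - k) ^ 2)) := by
            gcongr
        _ = _ := by ring
  have hdiff : (((∫ t in a..b, ((t - a) * (b - t)) * ‖tri lam F c t‖ ^ 2) - (b - a) ^ 3 / 6 * ∑ k ∈ F, ‖c k‖ ^ 2 : ℝ) : ℂ)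
      = ∑ j ∈ F, ∑ k ∈ F, (c j * (starRingEnd ℂ) (c k) * A j k - (if j = k then (((b - a) ^ 3 / 6 * ‖c j‖ ^ 2 : ℝ) : ℂ) else 0)) := by
    simp_rw [Finset.sum_sub_distrib]
    rw [Complex.ofReal_sub, hexp]
    congr 1
    rw [Finset.mul_sum, Complex.ofReal_sum]
    refine Finset.sum_congr rfl fun j hj => ?_
    rw [Finset.sum_ite_eq, if_pos hj]
  rw [← Real.norm_eq_abs, ← Complex.norm_real, hdiff]
  calc _ ≤ ∑ j ∈ F, ∑ k ∈ F, M / 2 * (1 / ((j:ℝ) - k) ^ 2) * (‖c j‖ ^ 2 + ‖c k‖ ^ 2) :=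
        norm_sum_le_of_le _ fun j hj => norm_sum_le_of_le _ fun k hk => hterm j hj k hk
    _ = (∑ j ∈ F, M / 2 * ‖c j‖ ^ 2 * ∑ k ∈ F, (1 / ((j:ℝ) - k) ^ 2))
        + ∑ k ∈ F, M / 2 * ‖c k‖ ^ 2 * ∑ j ∈ F, (1 / ((k:ℝ) - j) ^ 2) := by
        simp_rw [mul_add, Finset.sum_add_distrib]
        congr 1
        · refine Finset.sum_congr rfl fun j hj => ?_
          rw [Finset.mul_sum]
          exact Finset.sum_congr rfl fun k hk => by ring
        · rw [Finset.sum_comm]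
          refine Finset.sum_congr rfl fun j hj => ?_
          rw [Finset.mul_sum]
          refine Finset.sum_congr rfl fun k hk => ?_
          rw [show ((k:ℝ) - j) ^ 2 = ((j:ℝ) - k) ^ 2 by ring]
          ring
    _ ≤ (∑ j ∈ F, M / 2 * ‖c j‖ ^ 2 * Zc) + ∑ k ∈ F, M / 2 * ‖c k‖ ^ 2 * Zc := by
        gcongr <;> exact sum_Z F _
    _ = _ := by
        rw [← Finset.sum_mul, ← Finset.mul_sum]
        ring

noncomputable def nsq (T : ℝ) (f : ℝ → ℂ) : ℝ := ∫ t in (0:ℝ)..T, ‖f t‖ ^ 2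

theorem nsq_nonneg (T : ℝ) (hT : 0 ≤ T) (f : ℝ → ℂ) : 0 ≤ nsq T f :=
  intervalIntegral.integral_nonneg hT (fun t _ => by positivity)

theorem nsq_mono (T T' : ℝ) (hT : 0 ≤ T') (h : T' ≤ T) (f : ℝ → ℂ) (hf : Continuous f) :
    nsq T' f ≤ nsq T f := by
  unfold nsq
  apply intervalIntegral.integral_mono_interval le_rfl hT h
  · exact Eventually.of_forall fun t => by simp
  · apply Continuous.intervalIntegrable; fun_prop

theorem nsq_add_le (T : ℝ) (hT : 0 ≤ T) (f g : ℝ → ℂ) (hf : Continuous f) (hg : Continuous g) :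
    nsq T (fun t => f t + g t) ≤ 2 * nsq T f + 2 * nsq T g := by
  unfold nsq
  rw [← intervalIntegral.integral_const_mul, ← intervalIntegral.integral_const_mul,
    ← intervalIntegral.integral_add]
  · apply intervalIntegral.integral_mono_on hT
    · apply Continuous.intervalIntegrable; fun_prop
    · apply Continuous.intervalIntegrable; fun_prop
    · intro t _
      have := norm_add_le (f t) (g t)
      have h1 : ‖f t + g t‖ ^ 2 ≤ (‖f t‖ + ‖g t‖) ^ 2 := by gcongr
      nlinarith [sq_nonneg (‖f t‖ - ‖g t‖)]
  · apply Continuous.intervalIntegrable; fun_prop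
  · apply Continuous.intervalIntegrable; fun_prop

theorem nsq_sub_le (T : ℝ) (hT : 0 ≤ T) (f g : ℝ → ℂ) (hf : Continuous f) (hg : Continuous g) :
    nsq T (fun t => f t - g t) ≤ 2 * nsq T f + 2 * nsq T g := by
  have := nsq_add_le T hT f (fun t => - g t) hf hg.neg
  simpa [sub_eq_add_neg, nsq] using this

theorem bessel_tail (lam : ℤ → ℝ) (γ T : ℝ) (hγ : 0 < γ) (hT : 0 < T) :
    ∃ C : ℝ, 0 ≤ C ∧ ∀ (F : Finset ℤ) (c : ℤ → ℂ),
    (∀ j ∈ F, ∀ k ∈ F, j ≠ k → γ * |(j : ℝ) - k| ≤ |lam j - lam k|) →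
    nsq T (tri lam F c) ≤ C * ∑ k ∈ F, ‖c k‖ ^ 2 := by
  have hZ := Zc_nonneg
  refine ⟨(1 / (2 * T ^ 2)) * ((3 * T) ^ 3 / 6 + 4 * (3 * T) / γ ^ 2 * Zc), by positivity, ?_⟩
  intro F c hg
  have h := gram_bound lam F c γ (-T) (2 * T) hγ (by linarith) hg
  have h1 := (abs_le.1 h).2
  have hcont := tri_cont lam F c
  have h2 : nsq T (tri lam F c) ≤ (1 / (2 * T ^ 2)) *
      ∫ t in (-T)..(2 * T), ((t - (-T)) * (2 * T - t)) * ‖tri lam F c t‖ ^ 2 := by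
    rw [← intervalIntegral.integral_const_mul]
    calc nsq T (tri lam F c) ≤ ∫ t in (0:ℝ)..T, 1 / (2 * T ^ 2) * (((t - (-T)) * (2 * T - t)) * ‖tri lam F c t‖ ^ 2) := by
          unfold nsq
          apply intervalIntegral.integral_mono_on hT.le
          · apply Continuous.intervalIntegrable; fun_prop
          · apply Continuous.intervalIntegrable; fun_prop
          · intro t ht
            have : 1 ≤ 1 / (2 * T ^ 2) * ((t - (-T)) * (2 * T - t)) := by
              rw [one_div, ← div_eq_inv_mul, le_div_iff₀ (by positivity)]
              nlinarith [mul_nonneg ht.1 (sub_nonneg.2 ht.2)]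
            nlinarith [sq_nonneg ‖tri lam F c t‖]
      _ ≤ _ := by
          apply intervalIntegral.integral_mono_interval (by linarith) hT.le (by linarith)
          · refine (ae_restrict_iff' measurableSet_Ioc).2 (Eventually.of_forall fun t ht => ?_)
            have h1 : 0 ≤ t - -T := by linarith [ht.1]
            have h2 : 0 ≤ 2 * T - t := by linarith [ht.2]
            simp only [Pi.zero_apply]
            positivity
          · apply Continuous.intervalIntegrable; fun_prop
  refine h2.trans ?_
  rw [mul_assoc]
  gcongr
  have e : (2 * T - -T) = 3 * T := by ring
  rw [e] at h1
  linarith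

theorem ingham_tail (lam : ℤ → ℝ) (γ T : ℝ) (hγ : 0 < γ) (hT : 0 < T)
    (hbig : 4 * T / γ ^ 2 * Zc ≤ T ^ 3 / 12) (F : Finset ℤ) (c : ℤ → ℂ)
    (hg : ∀ j ∈ F, ∀ k ∈ F, j ≠ k → γ * |(j : ℝ) - k| ≤ |lam j - lam k|) :
    ∑ k ∈ F, ‖c k‖ ^ 2 ≤ (12 / T) * nsq T (tri lam F c) := by
  have h := gram_bound lam F c γ 0 T hγ hT.le hg
  have h1 := (abs_le.1 h).1
  have hcont := tri_cont lam F c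
  have h2 : ∫ t in (0:ℝ)..T, ((t - 0) * (T - t)) * ‖tri lam F c t‖ ^ 2 ≤ T ^ 2 * nsq T (tri lam F c) := by
    unfold nsq
    rw [← intervalIntegral.integral_const_mul]
    apply intervalIntegral.integral_mono_on hT.le
    · apply Continuous.intervalIntegrable; fun_prop
    · apply Continuous.intervalIntegrable; fun_prop
    · intro t ht
      gcongr
      nlinarith [ht.1, ht.2]
  simp only [sub_zero] at h1 h2
  have hS : 0 ≤ ∑ k ∈ F, ‖c k‖ ^ 2 := by positivity
  have h3 := mul_le_mul_of_nonneg_right hbig hS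
  have h4 : T ^ 3 / 12 * ∑ k ∈ F, ‖c k‖ ^ 2 ≤ T ^ 2 * nsq T (tri lam F c) := by linarith
  have h5 : T ^ 3 / 12 * ∑ k ∈ F, ‖c k‖ ^ 2 = T ^ 2 * ((T / 12) * ∑ k ∈ F, ‖c k‖ ^ 2) := by ring
  rw [h5] at h4
  have h6 := le_of_mul_le_mul_left h4 (by positivity)
  rw [div_mul_eq_mul_div, le_div_iff₀ hT]
  linarith

theorem sq_norm_integral_le (δ : ℝ) (hδ : 0 < δ) (g : ℝ → ℂ) (hg : Continuous g) :
    ‖∫ s in (0:ℝ)..δ, g s‖ ^ 2 ≤ δ * ∫ s in (0:ℝ)..δ, ‖g s‖ ^ 2 := by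
  set J := ∫ s in (0:ℝ)..δ, ‖g s‖ with hJ
  have h1 : ‖∫ s in (0:ℝ)..δ, g s‖ ≤ J := intervalIntegral.norm_integral_le_integral_norm hδ.le
  have hJ0 : 0 ≤ J := (norm_nonneg _).trans h1
  have h2 : 0 ≤ ∫ s in (0:ℝ)..δ, (δ * ‖g s‖ - J) ^ 2 :=
    intervalIntegral.integral_nonneg hδ.le (fun t _ => by positivity)
  have h3 : ∫ s in (0:ℝ)..δ, (δ * ‖g s‖ - J) ^ 2 = δ ^ 2 * (∫ s in (0:ℝ)..δ, ‖g s‖ ^ 2) - δ * J ^ 2 := by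
    have : ∀ s, (δ * ‖g s‖ - J) ^ 2 = δ ^ 2 * ‖g s‖ ^ 2 - 2 * δ * J * ‖g s‖ + J ^ 2 := fun s => by ring
    simp_rw [this]
    rw [intervalIntegral.integral_add, intervalIntegral.integral_sub,
      intervalIntegral.integral_const_mul, intervalIntegral.integral_const_mul,
      intervalIntegral.integral_const, ← hJ]
    · simp; ring
    all_goals apply Continuous.intervalIntegrable; fun_prop
  rw [h3] at h2
  have h4 : J ^ 2 ≤ δ * ∫ s in (0:ℝ)..δ, ‖g s‖ ^ 2 := by
    have : δ * J ^ 2 ≤ δ * (δ * ∫ s in (0:ℝ)..δ, ‖g s‖ ^ 2) := by nlinarith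
    exact le_of_mul_le_mul_left this hδ
  refine le_trans ?_ h4
  gcongr

noncomputable def Bop (μ δ : ℝ) (f : ℝ → ℂ) (t : ℝ) : ℂ :=
  f t - (1 / δ : ℂ) * ∫ s in (0:ℝ)..δ, ex (-μ) s * f (t + s)

theorem Bop_cont (μ δ : ℝ) (f : ℝ → ℂ) (hf : Continuous f) : Continuous (Bop μ δ f) := by
  unfold Bop
  have h := ex_cont (-μ)
  have : Continuous (fun t : ℝ => ∫ s in (0:ℝ)..δ, ex (-μ) s * f (t + s)) := by
    apply intervalIntegral.continuous_parametric_intervalIntegral_of_continuous'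
    unfold Function.uncurry
    fun_prop
  fun_prop

theorem Bop_nsq (μ δ T : ℝ) (hδ : 0 < δ) (hT : 0 ≤ T) (f : ℝ → ℂ) (hf : Continuous f) :
    nsq T (Bop μ δ f) ≤ (2 + 2 * (T / δ)) * nsq (T + δ) f := by
  have hex := ex_cont (-μ)
  have hB := Bop_cont μ δ f hf
  have hpt : ∀ t ∈ Set.Icc 0 T, ‖Bop μ δ f t‖ ^ 2 ≤ 2 * ‖f t‖ ^ 2 + 2 * (1 / δ * nsq (T + δ) f) := by
    intro t ht
    have h1 : ‖(1 / δ : ℂ) * ∫ s in (0:ℝ)..δ, ex (-μ) s * f (t + s)‖ ^ 2 ≤ 1 / δ * nsq (T + δ) f := by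
      have h2 := sq_norm_integral_le δ hδ (fun s => ex (-μ) s * f (t + s)) (by fun_prop)
      simp only [norm_mul, norm_ex, one_mul] at h2
      have h3 : ∫ s in (0:ℝ)..δ, ‖f (t + s)‖ ^ 2 ≤ nsq (T + δ) f := by
        rw [intervalIntegral.integral_comp_add_left (fun x => ‖f x‖ ^ 2) t]
        unfold nsq
        apply intervalIntegral.integral_mono_interval
        · simpa using ht.1
        · linarith
        · linarith [ht.2]
        · exact Eventually.of_forall fun t => by simp
        · apply Continuous.intervalIntegrable; fun_prop
      have h4 : ‖(1 / δ : ℂ)‖ = 1 / δ := by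
        simp [abs_of_pos hδ]
      rw [norm_mul, mul_pow, h4]
      calc (1 / δ) ^ 2 * ‖∫ s in (0:ℝ)..δ, ex (-μ) s * f (t + s)‖ ^ 2
          ≤ (1 / δ) ^ 2 * (δ * nsq (T + δ) f) := by
            gcongr
            exact h2.trans (by gcongr)
        _ = 1 / δ * nsq (T + δ) f := by field_simp
    unfold Bop
    have h5 := norm_sub_le (f t) ((1 / δ : ℂ) * ∫ s in (0:ℝ)..δ, ex (-μ) s * f (t + s))
    set y := (1 / δ : ℂ) * ∫ s in (0:ℝ)..δ, ex (-μ) s * f (t + s)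
    have h6 : ‖f t - y‖ ^ 2 ≤ (‖f t‖ + ‖y‖) ^ 2 := by gcongr
    nlinarith [sq_nonneg (‖f t‖ - ‖y‖)]
  calc nsq T (Bop μ δ f) ≤ ∫ t in (0:ℝ)..T, (2 * ‖f t‖ ^ 2 + 2 * (1 / δ * nsq (T + δ) f)) := by
        unfold nsq
        apply intervalIntegral.integral_mono_on hT
        · apply Continuous.intervalIntegrable; fun_prop
        · apply Continuous.intervalIntegrable; fun_prop
        · exact hpt
    _ = 2 * nsq T f + 2 * (T / δ) * nsq (T + δ) f := by
        rw [intervalIntegral.integral_add, intervalIntegral.integral_const_mul,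
          intervalIntegral.integral_const]
        · unfold nsq; simp; ring
        all_goals apply Continuous.intervalIntegrable; fun_prop
    _ ≤ _ := by
        have := nsq_mono (T + δ) T hT (by linarith) f hf
        linarith

theorem Bop_add (μ δ : ℝ) (f g : ℝ → ℂ) (hf : Continuous f) (hg : Continuous g) (t : ℝ) :
    Bop μ δ (fun t => f t + g t) t = Bop μ δ f t + Bop μ δ g t := by
  have hex := ex_cont (-μ)
  unfold Bop
  simp_rw [mul_add]
  rw [intervalIntegral.integral_add]
  · ring
  all_goals apply Continuous.intervalIntegrable; fun_prop

theorem Bop_smul (μ δ : ℝ) (c : ℂ) (f : ℝ → ℂ) (t : ℝ) :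
    Bop μ δ (fun t => c * f t) t = c * Bop μ δ f t := by
  unfold Bop
  simp_rw [mul_left_comm _ c]
  rw [intervalIntegral.integral_const_mul]
  ring

theorem Bop_sum {ι : Type*} (μ δ : ℝ) (F : Finset ι) (f : ι → ℝ → ℂ) (hf : ∀ i, Continuous (f i)) (t : ℝ) :
    Bop μ δ (fun t => ∑ i ∈ F, f i t) t = ∑ i ∈ F, Bop μ δ (f i) t := by
  have hex := ex_cont (-μ)
  unfold Bop
  simp_rw [Finset.mul_sum]
  rw [intervalIntegral.integral_finsetSum, Finset.sum_sub_distrib, Finset.mul_sum]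
  intro i _
  have := hf i
  apply Continuous.intervalIntegrable; fun_prop

noncomputable def mult (δ y : ℝ) : ℂ := 1 - (1 / δ : ℂ) * ∫ s in (0:ℝ)..δ, ex y s

theorem ex_mul (x y t : ℝ) : ex x t * ex y t = ex (x + y) t := by
  unfold ex
  rw [← Complex.exp_add]
  congr 1
  push_cast
  ring

theorem Bop_ex (μ δ x t : ℝ) : Bop μ δ (ex x) t = mult δ (x - μ) * ex x t := by
  unfold Bop mult
  have : ∀ s, ex (-μ) s * ex x (t + s) = ex x t * ex (x - μ) s := by
    intro s
    rw [ex_add, mul_left_comm, ex_mul]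
    congr 2
    ring
  simp_rw [this]
  rw [intervalIntegral.integral_const_mul]
  ring

theorem integral_ex (δ y : ℝ) (hy : y ≠ 0) :
    ∫ s in (0:ℝ)..δ, ex y s = (ex y δ - 1) / (Complex.I * y) := by
  have hc : (Complex.I * y : ℂ) ≠ 0 := by simp [hy]
  have hd : ∀ t : ℝ, HasDerivAt (fun t : ℝ => ex y t / (Complex.I * y)) (ex y t) t := by
    intro t
    refine ((hasDerivAt_ex y t).div_const (Complex.I * y)).congr_deriv ?_
    exact mul_div_cancel_left₀ _ hc
  rw [intervalIntegral.integral_eq_sub_of_hasDerivAt (fun t _ => hd t)]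
  · have : ex y 0 = 1 := by simp [ex]
    rw [this]; ring
  · exact (ex_cont y).intervalIntegrable _ _

theorem mult_zero (δ : ℝ) (hδ : 0 < δ) : mult δ 0 = 0 := by
  unfold mult
  simp only [ex_zero]
  have : (δ : ℂ) ≠ 0 := by exact_mod_cast hδ.ne'
  simp [this]

theorem mult_ne_zero (δ y : ℝ) (hδ : 0 < δ) (hy : y ≠ 0) : mult δ y ≠ 0 := by
  intro h
  unfold mult at h
  rw [integral_ex δ y hy] at h
  have hc : (Complex.I * y : ℂ) ≠ 0 := by simp [hy]
  have hd : (δ : ℂ) ≠ 0 := by exact_mod_cast hδ.ne'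
  have h1 : ex y δ = 1 + ((y * δ : ℝ) : ℂ) * Complex.I := by
    have hy' : (y : ℂ) ≠ 0 := by exact_mod_cast hy
    field_simp at h
    push_cast
    linear_combination -h
  have h2 : (ex y δ).im = Real.sin (y * δ) := by
    unfold ex
    rw [show Complex.I * (y:ℂ) * δ = ((y * δ : ℝ) : ℂ) * Complex.I by push_cast; ring,
      Complex.exp_ofReal_mul_I_im]
  have h3 : (ex y δ).im = y * δ := by
    rw [h1]; simp
  have h4 := Real.abs_sin_lt_abs (x := y * δ) (by positivity)
  rw [← h2, h3] at h4
  exact lt_irrefl _ h4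

theorem mult_large (δ y : ℝ) (hδ : 0 < δ) (hy : 4 / δ ≤ |y|) : 1 / 2 ≤ ‖mult δ y‖ := by
  have hy0 : 0 < |y| := lt_of_lt_of_le (by positivity) hy
  have hy1 : y ≠ 0 := abs_pos.1 hy0
  unfold mult
  rw [integral_ex δ y hy1]
  set z := (1 / δ : ℂ) * ((ex y δ - 1) / (Complex.I * y)) with hz
  have h1 : ‖z‖ ≤ 1 / 2 := by
    rw [hz, norm_mul, norm_div, norm_div, norm_mul]
    simp only [norm_one, Complex.norm_real, Complex.norm_I, one_mul, Real.norm_eq_abs, abs_of_pos hδ]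
    have h2 : ‖ex y δ - 1‖ ≤ 2 := by
      refine (norm_sub_le _ _).trans ?_
      rw [norm_ex]; norm_num
    have h3 : 4 ≤ |y| * δ := by rwa [div_le_iff₀ hδ] at hy
    rw [div_mul_div_comm, one_mul, div_le_iff₀ (by positivity)]
    nlinarith
  have h2 : ‖(1:ℂ)‖ - ‖z‖ ≤ ‖1 - z‖ := norm_sub_norm_le _ _
  rw [norm_one] at h2
  linarith

theorem mult_lower (lam : ℤ → ℝ) (S : Set ℤ) (μ δ : ℝ) (hδ : 0 < δ)
    (hfin : ∀ R : ℝ, {k | |lam k| < R}.Finite) (hS : ∀ k ∈ S, lam k ≠ μ) :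
    ∃ c : ℝ, 0 < c ∧ ∀ k ∈ S, c ≤ ‖mult δ (lam k - μ)‖ := by
  classical
  set P := (hfin (4 / δ + |μ|)).toFinset.filter (fun k => k ∈ S) with hP
  have hout : ∀ k ∈ S, k ∉ P → 1 / 2 ≤ ‖mult δ (lam k - μ)‖ := by
    intro k hk hkP
    apply mult_large δ _ hδ
    simp only [hP, Finset.mem_filter, Set.Finite.mem_toFinset, Set.mem_ofPred_eq, hk, and_true,
      not_lt] at hkP
    have := abs_sub_abs_le_abs_sub (lam k) μ
    linarith
  rcases P.eq_empty_or_nonempty with he | hne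
  · refine ⟨1 / 2, by norm_num, fun k hk => hout k hk (by simp [he])⟩
  · obtain ⟨k0, hk0, hmin⟩ := P.exists_min_image (fun k => ‖mult δ (lam k - μ)‖) hne
    have hk0S : k0 ∈ S := (Finset.mem_filter.1 hk0).2
    have hpos : 0 < ‖mult δ (lam k0 - μ)‖ :=
      norm_pos_iff.2 (mult_ne_zero δ _ hδ (sub_ne_zero.2 (hS k0 hk0S)))
    refine ⟨min (1 / 2) ‖mult δ (lam k0 - μ)‖, by positivity, fun k hk => ?_⟩
    by_cases hkP : k ∈ P
    · exact (min_le_right _ _).trans (hmin k hkP)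
    · exact (min_le_left _ _).trans (hout k hk hkP)

def LowX (lam : ℤ → ℝ) (S : Set ℤ) (T : ℝ) (V : Set (ℝ → ℂ)) : Prop :=
  ∃ C : ℝ, 0 ≤ C ∧ ∀ F : Finset ℤ, (∀ k ∈ F, k ∈ S) → ∀ (a : ℤ → ℂ), ∀ g ∈ V,
    ∑ k ∈ F, ‖a k‖ ^ 2 ≤ C * nsq T (fun t => tri lam F a t + g t)

theorem kill (lam : ℤ → ℝ) (S : Set ℤ) (μ δ T : ℝ) (hδ : 0 < δ) (hT : 0 ≤ T)
    (hfin : ∀ R : ℝ, {k | |lam k| < R}.Finite) (hS : ∀ k ∈ S, lam k ≠ μ)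
    (V V' : Set (ℝ → ℂ)) (hV : ∀ g ∈ V, Continuous g) (hVV : ∀ g ∈ V, Bop μ δ g ∈ V')
    (h : LowX lam S T V') : LowX lam S (T + δ) V := by
  obtain ⟨c, hc, hm⟩ := mult_lower lam S μ δ hδ hfin hS
  obtain ⟨C, hC, h⟩ := h
  refine ⟨(c ^ 2)⁻¹ * (C * (2 + 2 * (T / δ))), by positivity, ?_⟩
  intro F hF a g hg
  have h1 := h F hF (fun k => mult δ (lam k - μ) * a k) _ (hVV g hg)
  have h2 : (fun t => tri lam F (fun k => mult δ (lam k - μ) * a k) t + Bop μ δ g t)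
      = Bop μ δ (fun t => tri lam F a t + g t) := by
    funext t
    rw [Bop_add μ δ _ _ (tri_cont lam F a) (hV g hg)]
    congr 1
    unfold tri
    rw [Bop_sum]
    · refine Finset.sum_congr rfl fun k _ => ?_
      rw [Bop_smul, Bop_ex]
      ring
    · intro k
      have := ex_cont (lam k)
      fun_prop
  rw [h2] at h1
  have h3 := Bop_nsq μ δ T hδ hT (fun t => tri lam F a t + g t) ((tri_cont lam F a).add (hV g hg))
  have h4 : c ^ 2 * ∑ k ∈ F, ‖a k‖ ^ 2 ≤ ∑ k ∈ F, ‖mult δ (lam k - μ) * a k‖ ^ 2 := by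
    rw [Finset.mul_sum]
    refine Finset.sum_le_sum fun k hk => ?_
    rw [norm_mul, mul_pow]
    gcongr
    exact hm k (hF k hk)
  rw [mul_assoc, ← div_eq_inv_mul, le_div_iff₀ (by positivity)]
  calc _ = c ^ 2 * ∑ k ∈ F, ‖a k‖ ^ 2 := mul_comm _ _
    _ ≤ _ := h4.trans h1
    _ ≤ C * ((2 + 2 * (T / δ)) * nsq (T + δ) (fun t => tri lam F a t + g t)) := by gcongr
    _ = _ := by ring

theorem nsq_ex (T μ : ℝ) (b : ℂ) : nsq T (fun t => b * ex μ t) = T * ‖b‖ ^ 2 := by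
  unfold nsq
  simp [norm_ex]

def Bess (lam : ℤ → ℝ) (S : Set ℤ) (T : ℝ) : Prop :=
  ∃ C : ℝ, 0 ≤ C ∧ ∀ F : Finset ℤ, (∀ k ∈ F, k ∈ S) → ∀ (a : ℤ → ℂ),
    nsq T (tri lam F a) ≤ C * ∑ k ∈ F, ‖a k‖ ^ 2

theorem tri_split (lam : ℤ → ℝ) (F : Finset ℤ) (a : ℤ → ℂ) (i : ℤ) (hi : i ∈ F) :
    tri lam F a = fun t => tri lam (F.erase i) a t + a i * ex (lam i) t := by
  funext t
  unfold tri
  rw [Finset.sum_erase_add _ _ hi]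

theorem bess_insert (lam : ℤ → ℝ) (S : Set ℤ) (T : ℝ) (hT : 0 ≤ T) (i : ℤ) (h : Bess lam S T) :
    Bess lam (insert i S) T := by
  obtain ⟨C, hC, h⟩ := h
  refine ⟨2 * C + 2 * T, by positivity, fun F hF a => ?_⟩
  have hS : 0 ≤ ∑ k ∈ F, ‖a k‖ ^ 2 := by positivity
  by_cases hi : i ∈ F
  · have hF' : ∀ k ∈ F.erase i, k ∈ S := fun k hk => by
      have := hF k (Finset.mem_of_mem_erase hk)
      rcases this with h | h
      · exact absurd h (Finset.ne_of_mem_erase hk)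
      · exact h
    have h1 := h (F.erase i) hF' a
    have hex := ex_cont (lam i)
    have h2 := nsq_add_le T hT (tri lam (F.erase i) a) (fun t => a i * ex (lam i) t)
      (tri_cont _ _ _) (by fun_prop)
    rw [← tri_split lam F a i hi, nsq_ex] at h2
    have h3 := Finset.sum_erase_add F (fun k => ‖a k‖ ^ 2) hi
    have h4 : 0 ≤ ∑ k ∈ F.erase i, ‖a k‖ ^ 2 := by positivity
    rw [← h3]
    nlinarith [sq_nonneg ‖a i‖, mul_nonneg hC (sq_nonneg ‖a i‖), mul_nonneg hT h4]
  · have hF' : ∀ k ∈ F, k ∈ S := fun k hk => by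
      rcases hF k hk with h | h
      · exact absurd (h ▸ hk) hi
      · exact h
    have h1 := h F hF' a
    nlinarith [mul_nonneg hC hS, mul_nonneg hT hS]

theorem low_insert (lam : ℤ → ℝ) (hinj : Function.Injective lam) (S : Set ℤ) (δ T : ℝ) (hδ : 0 < δ) (hT : 0 ≤ T)
    (hfin : ∀ R : ℝ, {k | |lam k| < R}.Finite) (i : ℤ) (hB : Bess lam S (T + δ)) (h : LowX lam S T {0}) :
    LowX lam (insert i S) (T + δ) {0} := by
  by_cases hiS : i ∈ S
  · rw [Set.insert_eq_of_mem hiS]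
    obtain ⟨C, hC, h⟩ := h
    refine ⟨C, hC, fun F hF a g hg => (h F hF a g hg).trans ?_⟩
    gcongr
    apply nsq_mono _ _ hT (by linarith)
    rw [Set.mem_singleton_iff] at hg
    subst hg
    simpa using tri_cont lam F a
  have hex := ex_cont (lam i)
  have hk := kill lam S (lam i) δ T hδ hT hfin (fun k hk hh => hiS (hinj hh ▸ hk))
    {g | ∃ b : ℂ, g = fun t => b * ex (lam i) t} {0}
    (by rintro g ⟨b, rfl⟩; fun_prop)
    (by
      rintro g ⟨b, rfl⟩
      rw [Set.mem_singleton_iff]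
      funext t
      rw [Bop_smul, Bop_ex, sub_self, mult_zero δ hδ]
      simp) h
  obtain ⟨C, hC, hk⟩ := hk
  obtain ⟨D, hD, hB⟩ := hB
  have hTp : 0 < T + δ := by linarith
  refine ⟨C + (2 + 2 * (D * C)) / (T + δ), by positivity, fun F hF a g hg => ?_⟩
  rw [Set.mem_singleton_iff] at hg
  subst hg
  simp only [Pi.zero_apply, add_zero]
  set N := nsq (T + δ) (fun t => tri lam F a t) with hN
  have hN0 : 0 ≤ N := nsq_nonneg _ hTp.le _
  by_cases hi : i ∈ F
  · have hF' : ∀ k ∈ F.erase i, k ∈ S := fun k hk => by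
      have := hF k (Finset.mem_of_mem_erase hk)
      rcases this with h | h
      · exact absurd h (Finset.ne_of_mem_erase hk)
      · exact h
    have hs := tri_split lam F a i hi
    have h1 := hk (F.erase i) hF' a (fun t => a i * ex (lam i) t) ⟨_, rfl⟩
    rw [← hs] at h1
    have h2 := hB (F.erase i) hF' a
    have h3 := nsq_sub_le (T + δ) hTp.le (tri lam F a) (tri lam (F.erase i) a)
      (tri_cont _ _ _) (tri_cont _ _ _)
    have h4 : (fun t => tri lam F a t - tri lam (F.erase i) a t) = fun t => a i * ex (lam i) t := by
      rw [hs]; funext t; ring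
    rw [h4, nsq_ex] at h3
    have h6 := Finset.sum_erase_add F (fun k => ‖a k‖ ^ 2) hi
    rw [← h6, add_mul]
    have h5 : ‖a i‖ ^ 2 ≤ (2 + 2 * (D * C)) / (T + δ) * N := by
      rw [div_mul_eq_mul_div, le_div_iff₀ hTp]
      have : D * (∑ k ∈ F.erase i, ‖a k‖ ^ 2) ≤ D * (C * N) := mul_le_mul_of_nonneg_left h1 hD
      change (T + δ) * ‖a i‖ ^ 2 ≤ 2 * N + _ at h3
      nlinarith
    exact add_le_add h1 h5
  · have hF' : ∀ k ∈ F, k ∈ S := fun k hk => by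
      rcases hF k hk with h | h
      · exact absurd (h ▸ hk) hi
      · exact h
    have h1 := hk F hF' a 0 ⟨0, by funext t; simp⟩
    simp only [Pi.zero_apply, add_zero] at h1
    refine h1.trans ?_
    gcongr
    have : 0 ≤ (2 + 2 * (D * C)) / (T + δ) := by positivity
    linarith

theorem low_finite (lam : ℤ → ℝ) (hinj : Function.Injective lam)
    (hfin : ∀ R : ℝ, {k | |lam k| < R}.Finite) (S : Set ℤ) (hB : ∀ T, 0 < T → Bess lam S T)
    (P : Finset ℤ) : (∀ T, 0 < T → Bess lam (S ∪ P) T) ∧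
      ∀ T T' : ℝ, 0 < T → T < T' → LowX lam S T {0} → LowX lam (S ∪ P) T' {0} := by
  classical
  induction P using Finset.induction_on with
  | empty =>
    refine ⟨by simpa using hB, ?_⟩
    intro T T' hT hTT ⟨C, hC, h⟩
    simp only [Finset.coe_empty, Set.union_empty]
    refine ⟨C, hC, fun F hF a g hg => (h F hF a g hg).trans ?_⟩
    gcongr
    apply nsq_mono _ _ hT.le hTT.le
    rw [Set.mem_singleton_iff] at hg
    subst hg
    simpa using tri_cont lam F a
  | insert i P hi ih =>
    have e : S ∪ ((insert i P : Finset ℤ) : Set ℤ) = insert i (S ∪ P) := by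
      rw [Finset.coe_insert, Set.union_insert]
    rw [e]
    refine ⟨fun T hT => bess_insert lam _ T hT.le i (ih.1 T hT), ?_⟩
    intro T T' hT hTT h
    have h1 := ih.2 T ((T + T') / 2) hT (by linarith) h
    have h2 := low_insert lam hinj (S ∪ P) ((T' - T) / 2) ((T + T') / 2) (by linarith) (by linarith)
      hfin i (ih.1 _ (by linarith)) h1
    rwa [show (T + T') / 2 + (T' - T) / 2 = T' by ring] at h2

theorem low_all (lam : ℤ → ℝ) (hinj : Function.Injective lam)
    (hfin : ∀ R : ℝ, {k | |lam k| < R}.Finite)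
    (H : ∀ γ : ℝ, 0 < γ → ∃ P : Finset ℤ, ∀ j k, j ∉ P → k ∉ P → j ≠ k →
      γ * |(j : ℝ) - k| ≤ |lam j - lam k|) (T : ℝ) (hT : 0 < T) :
    Bess lam Set.univ T ∧ LowX lam Set.univ T {0} := by
  have hZ := Zc_nonneg
  set γ := Real.sqrt (192 * (Zc + 1) / T ^ 2) with hγ
  have hγ0 : 0 < γ := by positivity
  have hγ2 : γ ^ 2 = 192 * (Zc + 1) / T ^ 2 := Real.sq_sqrt (by positivity)
  obtain ⟨P, hP⟩ := H γ hγ0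
  have hB : ∀ T, 0 < T → Bess lam ((P : Set ℤ)ᶜ) T := by
    intro T hT
    obtain ⟨C, hC, h⟩ := bessel_tail lam γ T hγ0 hT
    refine ⟨C, hC, fun F hF a => h F a fun j hj k hk hjk => ?_⟩
    exact hP j k (by simpa using hF j hj) (by simpa using hF k hk) hjk
  have hL : LowX lam ((P : Set ℤ)ᶜ) (T / 2) {0} := by
    refine ⟨12 / (T / 2), by positivity, fun F hF a g hg => ?_⟩
    rw [Set.mem_singleton_iff] at hg
    subst hg
    simp only [Pi.zero_apply, add_zero]
    apply ingham_tail lam γ (T / 2) hγ0 (by positivity)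
    · rw [hγ2]
      have : 4 * (T / 2) / (192 * (Zc + 1) / T ^ 2) * Zc = T ^ 3 / 96 * (Zc / (Zc + 1)) := by
        field_simp
        ring
      rw [this]
      have h1 : Zc / (Zc + 1) ≤ 1 := by
        rw [div_le_one (by positivity)]; linarith
      have h2 : 0 < T ^ 3 := by positivity
      nlinarith
    · intro j hj k hk hjk
      exact hP j k (by simpa using hF j hj) (by simpa using hF k hk) hjk
  have h := low_finite lam hinj hfin _ hB P
  rw [Set.compl_union_self] at h
  exact ⟨h.1 T hT, h.2 (T / 2) T (by positivity) (by linarith) hL⟩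

def polyV (j : ℕ) : Submodule ℂ (ℝ → ℂ) :=
  Submodule.span ℂ ((fun (i : ℕ) (t : ℝ) => (t : ℂ) ^ i) '' Set.Iio j)

theorem mono_mem (i j : ℕ) (h : i < j) : (fun t : ℝ => (t : ℂ) ^ i) ∈ polyV j :=
  Submodule.subset_span ⟨i, h, rfl⟩

theorem polyV_cont (j : ℕ) (g : ℝ → ℂ) (hg : g ∈ polyV j) : Continuous g := by
  unfold polyV at hg
  induction hg using Submodule.span_induction with
  | mem x h =>
    obtain ⟨i, _, rfl⟩ := h
    fun_prop
  | zero => exact continuous_zero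
  | add x y _ _ hx hy => exact hx.add hy
  | smul a x _ hx => exact hx.const_smul a

theorem Bop_mono (δ : ℝ) (hδ : 0 < δ) (i : ℕ) :
    Bop 0 δ (fun t : ℝ => (t : ℂ) ^ i) ∈ polyV i := by
  have hd : (δ : ℂ) ≠ 0 := by exact_mod_cast hδ.ne'
  have h : Bop 0 δ (fun t : ℝ => (t : ℂ) ^ i) = ∑ l ∈ Finset.range i,
      (-((1 / δ : ℂ) * (i.choose l) * ∫ s in (0:ℝ)..δ, (s : ℂ) ^ (i - l))) • (fun t : ℝ => (t : ℂ) ^ l) := by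
    funext t
    unfold Bop
    simp only [neg_zero, ex_zero, one_mul, Complex.ofReal_add, add_pow]
    rw [intervalIntegral.integral_finsetSum]
    · rw [Finset.sum_range_succ]
      simp only [Finset.sum_apply, Pi.smul_apply, smul_eq_mul, neg_mul, Finset.sum_neg_distrib]
      rw [mul_add, Finset.mul_sum]
      have e1 : (1 / δ : ℂ) * ∫ s in (0:ℝ)..δ, (t : ℂ) ^ i * (s : ℂ) ^ (i - i) * (i.choose i) = (t:ℂ) ^ i := by
        simp
        field_simp
      rw [e1]
      have e2 : ∀ l ∈ Finset.range i, (1 / δ : ℂ) * ∫ s in (0:ℝ)..δ, (t : ℂ) ^ l * (s : ℂ) ^ (i - l) * (i.choose l)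
        = (1 / δ : ℂ) * (i.choose l) * (∫ s in (0:ℝ)..δ, (s : ℂ) ^ (i - l)) * (t : ℂ) ^ l := by
        intro l _
        rw [intervalIntegral.integral_mul_const, intervalIntegral.integral_const_mul]
        ring
      rw [Finset.sum_congr rfl e2]
      ring
    · intro l _
      apply Continuous.intervalIntegrable; fun_prop
  rw [h]
  exact Submodule.sum_mem _ fun l hl => Submodule.smul_mem _ _ (mono_mem l i (Finset.mem_range.1 hl))

theorem polyV_mono (i j : ℕ) (h : i ≤ j) : polyV i ≤ polyV j :=
  Submodule.span_mono (Set.image_mono (Set.Iio_subset_Iio h))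

theorem Bop_polyV (δ : ℝ) (hδ : 0 < δ) (j : ℕ) (g : ℝ → ℂ) (hg : g ∈ polyV (j + 1)) :
    Bop 0 δ g ∈ polyV j := by
  have hg' := hg
  unfold polyV at hg
  induction hg using Submodule.span_induction with
  | mem x h =>
    obtain ⟨i, hi, rfl⟩ := h
    exact polyV_mono i j (Nat.lt_succ_iff.1 hi) (Bop_mono δ hδ i)
  | zero =>
    have : Bop 0 δ 0 = 0 := by funext t; simp [Bop]
    rw [this]; exact Submodule.zero_mem _
  | add x y hx hy ihx ihy =>
    have : Bop 0 δ (x + y) = Bop 0 δ x + Bop 0 δ y := by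
      funext t
      exact Bop_add 0 δ x y (polyV_cont _ x hx) (polyV_cont _ y hy) t
    rw [this]
    exact Submodule.add_mem _ (ihx hx) (ihy hy)
  | smul a x hx ihx =>
    have : Bop 0 δ (a • x) = a • Bop 0 δ x := by
      funext t
      exact Bop_smul 0 δ a x t
    rw [this]
    exact Submodule.smul_mem _ _ (ihx hx)

theorem low_poly (lam : ℤ → ℝ) (hfin : ∀ R : ℝ, {k | |lam k| < R}.Finite) (h0 : ∀ k, lam k ≠ 0)
    (h : ∀ T, 0 < T → LowX lam Set.univ T {0}) (j : ℕ) :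
    ∀ T, 0 < T → LowX lam Set.univ T (polyV j) := by
  induction j with
  | zero =>
    intro T hT
    have : ((polyV 0 : Submodule ℂ (ℝ → ℂ)) : Set (ℝ → ℂ)) = {0} := by
      have : Set.Iio 0 = (∅ : Set ℕ) := by ext; simp
      simp [polyV, this]
    rw [this]
    exact h T hT
  | succ j ih =>
    intro T hT
    have := kill lam Set.univ 0 (T / 2) (T / 2) (by positivity) (by positivity) hfin (fun k _ => h0 k)
      (polyV (j + 1)) (polyV j) (fun g hg => polyV_cont _ g hg)
      (fun g hg => Bop_polyV _ (by positivity) j g hg) (ih (T / 2) (by positivity))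
    rwa [add_halves] at this

theorem cont_memLp (T : ℝ) (f : ℝ → ℂ) (hf : Continuous f) :
    MemLp f 2 (volume.restrict (Set.Ioo 0 T)) := by
  rw [memLp_two_iff_integrable_sq_norm hf.aestronglyMeasurable]
  have h : Continuous (fun x => ‖f x‖ ^ 2) := by fun_prop
  exact (h.integrableOn_Icc (a := 0) (b := T)).mono_set Set.Ioo_subset_Icc_self

noncomputable def Phi (T : ℝ) : C(ℝ, ℂ) →ₗ[ℂ] Lp ℂ 2 (volume.restrict (Set.Ioo 0 T)) where
  toFun f := (cont_memLp T f f.continuous).toLp f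
  map_add' f g := rfl
  map_smul' c f := rfl

theorem Phi_norm (T : ℝ) (hT : 0 ≤ T) (f : C(ℝ, ℂ)) : ‖Phi T f‖ ^ 2 = nsq T f := by
  have h1 : ((‖Phi T f‖ ^ 2 : ℝ) : ℂ) = inner ℂ (Phi T f) (Phi T f) := by
    rw [inner_self_eq_norm_sq_to_K]; simp
  have h2 : inner ℂ (Phi T f) (Phi T f) = ((nsq T f : ℝ) : ℂ) := by
    rw [L2.inner_def]
    unfold nsq
    rw [intervalIntegral.integral_of_le hT, integral_Ioc_eq_integral_Ioo, ← integral_complex_ofReal]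
    refine integral_congr_ae ?_
    filter_upwards [(cont_memLp T f f.continuous).coeFn_toLp] with t ht
    change inner ℂ ((cont_memLp T f f.continuous).toLp f t) ((cont_memLp T f f.continuous).toLp f t) = _
    rw [ht, inner_self_eq_norm_sq_to_K]
    simp
  rw [h2] at h1
  exact_mod_cast h1

theorem Phi_eq_zero (T : ℝ) (f : C(ℝ, ℂ)) (h : Phi T f = 0) : ∀ t ∈ Set.Ioo 0 T, f t = 0 := by
  have h1 := (cont_memLp T f f.continuous).coeFn_toLp
  have h2 : f =ᵐ[volume.restrict (Set.Ioo 0 T)] (fun _ => (0:ℂ)) := by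
    have h3 : (cont_memLp T f f.continuous).toLp f = 0 := h
    rw [h3] at h1
    filter_upwards [h1, Lp.coeFn_zero ℂ 2 (volume.restrict (Set.Ioo 0 T))] with t h4 h5
    rw [← h4, h5]; rfl
  exact Measure.eqOn_open_of_ae_eq h2 isOpen_Ioo f.continuous.continuousOn continuousOn_const

noncomputable def polyC (i : ℕ) : C(ℝ, ℂ) := ⟨fun t => (t : ℂ) ^ i, by fun_prop⟩
noncomputable def exC (μ : ℝ) : C(ℝ, ℂ) := ⟨ex μ, ex_cont μ⟩

noncomputable def Psi (T : ℝ) (N : ℕ) :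
    EuclideanSpace ℂ (Fin N) →ₗ[ℂ] Lp ℂ 2 (volume.restrict (Set.Ioo 0 T)) where
  toFun q := Phi T (∑ i, q i • polyC i)
  map_add' p q := by
    rw [← map_add, ← Finset.sum_add_distrib]
    simp [add_smul]
  map_smul' c q := by
    rw [← map_smul, Finset.smul_sum]
    simp [mul_smul]

theorem Psi_bounds (T : ℝ) (hT : 0 < T) (N : ℕ) : ∃ K M : ℝ, 0 ≤ K ∧ 0 ≤ M ∧
    ∀ q : EuclideanSpace ℂ (Fin N), ‖q‖ ^ 2 ≤ K * ‖Psi T N q‖ ^ 2 ∧ ‖Psi T N q‖ ^ 2 ≤ M * ‖q‖ ^ 2 := by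
  have hker : (Psi T N).ker = ⊥ := by
    rw [LinearMap.ker_eq_bot']
    intro q hq
    have h := Phi_eq_zero T _ hq
    set p : Polynomial ℂ := ∑ i : Fin N, Polynomial.C (q i) * Polynomial.X ^ (i : ℕ) with hp
    have hp0 : p = 0 := by
      apply Polynomial.eq_zero_of_infinite_isRoot
      have hinf : ((fun t : ℝ => (t : ℂ)) '' Set.Ioo 0 T).Infinite :=
        (Set.Ioo_infinite hT).image Complex.ofReal_injective.injOn
      refine hinf.mono ?_
      rintro _ ⟨t, ht, rfl⟩
      have := h t ht
      simp only [ContinuousMap.coe_sum, Finset.sum_apply, ContinuousMap.coe_smul, Pi.smul_apply,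
        smul_eq_mul] at this
      change p.IsRoot (t : ℂ)
      rw [Polynomial.IsRoot.def, hp, Polynomial.eval_finsetSum, ← this]
      refine Finset.sum_congr rfl fun i _ => ?_
      simp [polyC]
    ext i
    have : p.coeff i = q i := by
      rw [hp, Polynomial.finsetSum_coeff, Finset.sum_eq_single i]
      · simp
      · intro j _ hj
        rw [Polynomial.coeff_C_mul, Polynomial.coeff_X_pow, if_neg]
        · simp
        · intro hh; exact hj (Fin.ext hh.symm)
      · simp
    rw [← this, hp0]
    simp
  obtain ⟨K, _, hK⟩ := (Psi T N).exists_antilipschitzWith hker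
  set L := LinearMap.toContinuousLinearMap (Psi T N)
  refine ⟨(K : ℝ) ^ 2, ‖L‖ ^ 2, by positivity, by positivity, fun q => ⟨?_, ?_⟩⟩
  · rw [← mul_pow]
    have := hK.le_mul_dist q 0
    simp only [dist_zero_right, map_zero] at this
    gcongr
  · rw [← mul_pow]
    have : ‖L q‖ ≤ ‖L‖ * ‖q‖ := L.le_opNorm q
    gcongr
    exact this

noncomputable def sysE (lam : ℤ → ℝ) (N : ℕ) : ℤ ⊕ Fin N → C(ℝ, ℂ) :=
  Sum.elim (fun k => exC (lam k)) (fun i => polyC i)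

theorem sys_riesz (lam : ℤ → ℝ) (N : ℕ) (T : ℝ) (hT : 0 < T) (hB : Bess lam Set.univ T)
    (hL : LowX lam Set.univ T (polyV N)) : ∃ c C : ℝ, 0 < c ∧
    (∀ (F : Finset (ℤ ⊕ Fin N)) (a : ℤ ⊕ Fin N → ℂ), c * ∑ i ∈ F, ‖a i‖ ^ 2 ≤ ‖∑ i ∈ F, a i • Phi T (sysE lam N i)‖ ^ 2) ∧
    (∀ (F : Finset (ℤ ⊕ Fin N)) (a : ℤ ⊕ Fin N → ℂ), ‖∑ i ∈ F, a i • Phi T (sysE lam N i)‖ ^ 2 ≤ C * ∑ i ∈ F, ‖a i‖ ^ 2) := by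
  classical
  obtain ⟨D, hD, hB⟩ := hB
  obtain ⟨A, hA, hL⟩ := hL
  obtain ⟨K, M, hK, hM, hKM⟩ := Psi_bounds T hT N
  have key : ∀ (F : Finset (ℤ ⊕ Fin N)) (a : ℤ ⊕ Fin N → ℂ), ∃ x y s p : ℝ, 
      ‖∑ i ∈ F, a i • Phi T (sysE lam N i)‖ ^ 2 = x ∧ ∑ i ∈ F, ‖a i‖ ^ 2 = s + p ∧ 0 ≤ s ∧ 0 ≤ p ∧
      ∃ z, z ≤ D * s ∧ s ≤ A * x ∧ p ≤ K * y ∧ y ≤ M * p ∧ x ≤ 2 * z + 2 * y ∧ y ≤ 2 * x + 2 * z := by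
    intro F a
    set q : EuclideanSpace ℂ (Fin N) :=
      WithLp.toLp 2 (fun i => if i ∈ F.toRight then a (Sum.inr i) else 0) with hq
    set Q : C(ℝ, ℂ) := ∑ i, q i • polyC i with hQ
    have hPsi : Psi T N q = Phi T Q := rfl
    set a' : ℤ → ℂ := fun k => a (Sum.inl k) with ha'
    set f : C(ℝ, ℂ) := ⟨tri lam F.toLeft a', tri_cont _ _ _⟩ with hf
    have hQV : (Q : ℝ → ℂ) ∈ polyV N := by
      rw [hQ, ContinuousMap.coe_sum]
      exact Submodule.sum_mem _ fun i _ => Submodule.smul_mem _ _ (mono_mem i N i.2)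
    have hsum : ∑ i ∈ F, a i • Phi T (sysE lam N i) = Phi T (f + Q) := by
      have hF : F = F.toLeft.disjSum F.toRight := Finset.toLeft_disjSum_toRight.symm
      simp_rw [← map_smul, ← map_sum]
      congr 1
      conv_lhs => rw [hF]
      rw [Finset.sum_disjSum]
      congr 1
      · ext t
        simp [hf, tri, sysE, exC, ha']
      · rw [hQ]
        have : ∀ i : Fin N, q i • polyC i = if i ∈ F.toRight then a (Sum.inr i) • polyC i else 0 := by
          intro i
          simp only [hq]
          split_ifs
          · rfl
          · ext t; simp
        simp_rw [this]
        rw [Finset.sum_ite_mem, Finset.univ_inter]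
        rfl
    have hsq : ∑ i ∈ F, ‖a i‖ ^ 2 = ∑ k ∈ F.toLeft, ‖a' k‖ ^ 2 + ‖q‖ ^ 2 := by
      have hF : F = F.toLeft.disjSum F.toRight := Finset.toLeft_disjSum_toRight.symm
      conv_lhs => rw [hF]
      rw [Finset.sum_disjSum, EuclideanSpace.norm_sq_eq]
      congr 1
      have : ∀ i, ‖q i‖ ^ 2 = if i ∈ F.toRight then ‖a (Sum.inr i)‖ ^ 2 else 0 := by
        intro i
        simp only [hq]
        split_ifs <;> simp
      simp_rw [this]
      rw [Finset.sum_ite_mem, Finset.univ_inter]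
    refine ⟨‖Phi T (f + Q)‖ ^ 2, ‖Phi T Q‖ ^ 2, _, _, by rw [hsum], hsq, by positivity, by positivity,
      ‖Phi T f‖ ^ 2, ?_, ?_, ?_, ?_, ?_, ?_⟩
    · rw [Phi_norm T hT.le]
      exact hB F.toLeft (fun k _ => Set.mem_univ k) a'
    · rw [Phi_norm T hT.le]
      exact hL F.toLeft (fun k _ => Set.mem_univ k) a' Q hQV
    · rw [← hPsi]; exact (hKM q).1
    · rw [← hPsi]; exact (hKM q).2
    · rw [map_add]
      have := norm_add_le (Phi T f) (Phi T Q)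
      have h1 : ‖Phi T f + Phi T Q‖ ^ 2 ≤ (‖Phi T f‖ + ‖Phi T Q‖) ^ 2 := by gcongr
      nlinarith [sq_nonneg (‖Phi T f‖ - ‖Phi T Q‖)]
    · have e : Phi T Q = Phi T (f + Q) - Phi T f := by rw [map_add]; abel
      have := norm_sub_le (Phi T (f + Q)) (Phi T f)
      rw [← e] at this
      have h1 : ‖Phi T Q‖ ^ 2 ≤ (‖Phi T (f + Q)‖ + ‖Phi T f‖) ^ 2 := by gcongr
      nlinarith [sq_nonneg (‖Phi T (f + Q)‖ - ‖Phi T f‖)]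
  refine ⟨(A + K * (2 + 2 * (D * A)) + 1)⁻¹, 2 * D + 2 * M, by positivity, ?_, ?_⟩
  · intro F a
    obtain ⟨x, y, s, p, hx, hs, hs0, hp0, z, h1, h2, h3, h4, h5, h6⟩ := key F a
    rw [hx, hs, inv_mul_le_iff₀ (by positivity)]
    have hx0 : 0 ≤ x := by rw [← hx]; positivity
    have h7 : D * s ≤ D * (A * x) := mul_le_mul_of_nonneg_left h2 hD
    have h8 : K * y ≤ K * (2 * x + 2 * (D * (A * x))) := mul_le_mul_of_nonneg_left (by linarith) hK
    nlinarith
  · intro F a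
    obtain ⟨x, y, s, p, hx, hs, hs0, hp0, z, h1, h2, h3, h4, h5, h6⟩ := key F a
    rw [hx, hs]
    nlinarith [mul_nonneg hD hp0, mul_nonneg hM hs0]

def lamZ (ω : ℕ → ℝ) : ℤ → ℝ
  | Int.ofNat n => ω n
  | Int.negSucc n => - ω n

theorem lamZ_inj (ω : ℕ → ℝ) (hpos : ∀ k, 0 < ω k) (hmono : StrictMono ω) :
    Function.Injective (lamZ ω) := by
  intro j k h
  cases j with
  | ofNat j =>
    cases k with
    | ofNat k =>
      have h' : ω j = ω k := h
      rw [hmono.injective h']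
    | negSucc k =>
      have h' : ω j = - ω k := h
      linarith [hpos j, hpos k]
  | negSucc j =>
    cases k with
    | ofNat k =>
      have h' : - ω j = ω k := h
      linarith [hpos j, hpos k]
    | negSucc k =>
      have h' : - ω j = - ω k := h
      rw [hmono.injective (neg_injective h')]

theorem lamZ_ne (ω : ℕ → ℝ) (hpos : ∀ k, 0 < ω k) (k : ℤ) : lamZ ω k ≠ 0 := by
  cases k with
  | ofNat k => exact (hpos k).ne'
  | negSucc k => exact neg_ne_zero.2 (hpos k).ne'

theorem gap_nat (ω : ℕ → ℝ) (hpos : ∀ k, 0 < ω k)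
    (hgap : Filter.Tendsto (fun k => ω (k + 1) - ω k) Filter.atTop Filter.atTop)
    (γ : ℝ) (hγ : 0 < γ) : ∃ m : ℕ, (∀ k i, m ≤ k → γ * i ≤ ω (k + i) - ω k) ∧
      ∀ k, m ≤ k → γ * (k + 1) ≤ ω k := by
  obtain ⟨n, hn⟩ := Filter.eventually_atTop.1 (hgap.eventually_ge_atTop (2 * γ))
  have h1 : ∀ k i : ℕ, n ≤ k → 2 * γ * i ≤ ω (k + i) - ω k := by
    intro k i hk
    induction i with
    | zero => simp
    | succ i ih =>
      have := hn (k + i) (by omega)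
      rw [← add_assoc]
      push_cast
      linarith
  refine ⟨2 * n + 1, fun k i hk => ?_, fun k hk => ?_⟩
  · have := h1 k i (by omega)
    have h2 : 0 ≤ γ * i := by positivity
    linarith
  · obtain ⟨i, rfl⟩ := Nat.exists_eq_add_of_le (show n ≤ k by omega)
    have h2 := h1 n i le_rfl
    have h3 := hpos n
    have h4 : ((n + 1 : ℕ) : ℝ) ≤ (i : ℝ) := by
      exact_mod_cast (by omega)
    push_cast at h4 ⊢
    nlinarith

theorem lamZ_gap (ω : ℕ → ℝ) (hpos : ∀ k, 0 < ω k)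
    (hgap : Filter.Tendsto (fun k => ω (k + 1) - ω k) Filter.atTop Filter.atTop)
    (γ : ℝ) (hγ : 0 < γ) : ∃ P : Finset ℤ, ∀ j k, j ∉ P → k ∉ P → j ≠ k →
      γ * |(j : ℝ) - k| ≤ |lamZ ω j - lamZ ω k| := by
  obtain ⟨m, h1, h2⟩ := gap_nat ω hpos hgap γ hγ
  refine ⟨Finset.Icc (-(m + 1 : ℤ)) (m + 1), ?_⟩
  have hnn : ∀ j k : ℕ, m ≤ j → m ≤ k → γ * |(j : ℝ) - k| ≤ |ω j - ω k| := by
    intro j k hj hk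
    wlog hjk : k ≤ j generalizing j k
    · rw [abs_sub_comm, abs_sub_comm (ω j)]
      exact this k j hk hj (by omega)
    obtain ⟨i, rfl⟩ := Nat.exists_eq_add_of_le hjk
    have := h1 k i hk
    refine le_trans ?_ (this.trans (le_abs_self _))
    push_cast
    rw [add_sub_cancel_left, abs_of_nonneg (by positivity)]
  have hcr : ∀ j k : ℕ, m ≤ j → m ≤ k → γ * |(j : ℝ) + k + 1| ≤ ω j + ω k := by
    intro j k hj hk
    have := h2 j hj
    have := h2 k hk
    rw [abs_of_nonneg (by positivity)]
    nlinarith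
  intro j k hj hk _
  rw [Finset.mem_Icc] at hj hk
  cases j with
  | ofNat j =>
    cases k with
    | ofNat k =>
      have := hnn j k (by simp only [Int.ofNat_eq_natCast] at *; omega) (by simp only [Int.ofNat_eq_natCast] at *; omega)
      simpa [lamZ] using this
    | negSucc k =>
      have := hcr j k (by simp only [Int.ofNat_eq_natCast] at *; omega) (by omega)
      have e : ((Int.ofNat j : ℤ) : ℝ) - ((Int.negSucc k : ℤ) : ℝ) = (j : ℝ) + k + 1 := by
        simp [Int.cast_negSucc]; ring
      rw [e]
      simp only [lamZ, sub_neg_eq_add]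
      exact this.trans (le_abs_self _)
  | negSucc j =>
    cases k with
    | ofNat k =>
      have := hcr k j (by simp only [Int.ofNat_eq_natCast] at *; omega) (by omega)
      have e : ((Int.negSucc j : ℤ) : ℝ) - ((Int.ofNat k : ℤ) : ℝ) = -((k : ℝ) + j + 1) := by
        simp [Int.cast_negSucc]; ring
      rw [e, abs_neg]
      simp only [lamZ]
      rw [← neg_add', abs_neg, add_comm (ω j)]
      exact this.trans (le_abs_self _)
    | negSucc k =>
      have := hnn j k (by omega) (by omega)
      have e : ((Int.negSucc j : ℤ) : ℝ) - ((Int.negSucc k : ℤ) : ℝ) = -((j : ℝ) - k) := by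
        simp [Int.cast_negSucc]; ring
      rw [e, abs_neg]
      simp only [lamZ]
      rw [← neg_sub', abs_neg]
      exact this

theorem lamZ_fin (ω : ℕ → ℝ) (hpos : ∀ k, 0 < ω k)
    (hgap : Filter.Tendsto (fun k => ω (k + 1) - ω k) Filter.atTop Filter.atTop)
    (R : ℝ) : {k | |lamZ ω k| < R}.Finite := by
  obtain ⟨m, h1, h2⟩ := gap_nat ω hpos hgap 1 one_pos
  obtain ⟨n, hn⟩ := exists_nat_gt R
  have hb : ∀ k : ℕ, ω k < R → k ≤ m + n := by
    intro k hk
    by_contra hc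
    have := h2 k (by omega)
    have h3 : ((n : ℕ) : ℝ) ≤ k := by exact_mod_cast (by omega)
    linarith
  refine (Set.finite_Icc (-(m + n + 1 : ℤ)) (m + n)).subset ?_
  intro k hk
  rw [Set.mem_setOf_eq] at hk
  cases k with
  | ofNat k =>
    have := hb k ((le_abs_self _).trans_lt hk)
    simp only [Set.mem_Icc, Int.ofNat_eq_natCast]
    omega
  | negSucc k =>
    have := hb k ((le_abs_self _).trans_lt (by simpa [lamZ] using hk))
    simp only [Set.mem_Icc]
    omega

noncomputable def datF (N : ℕ) (dt : Fin N → ℝ) (d : ℕ → ℂ) : ℤ ⊕ Fin N → ℂ :=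
  Sum.elim (fun k : ℤ => match k with
    | Int.ofNat n => (starRingEnd ℂ) (d n)
    | Int.negSucc n => d n) (fun i => (dt i : ℂ))

theorem datF_hasSum (N : ℕ) (dt : Fin N → ℝ) (d : lp (fun _ : ℕ => ℂ) 2) :
    HasSum (fun i => ‖datF N dt d i‖ ^ 2) (‖d‖ ^ 2 + ‖d‖ ^ 2 + ∑ i, ‖dt i‖ ^ 2) := by
  have h := lp.hasSum_norm (p := 2) (by norm_num) d
  have h' : HasSum (fun n => ‖d n‖ ^ 2) (‖d‖ ^ 2) := by
    simpa using h
  refine HasSum.sum ?_ ?_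
  · have := HasSum.int_rec h' h'
    convert this using 1
    funext k
    cases k <;> simp [datF]
  · have := hasSum_fintype (fun i : Fin N => ‖dt i‖ ^ 2)
    convert this using 1
    funext i
    simp [datF]

noncomputable def datL (N : ℕ) : ((Fin N → ℝ) × (lp (fun _ : ℕ => ℂ) 2)) →ₗ[ℝ]
    lp (fun _ : ℤ ⊕ Fin N => ℂ) 2 where
  toFun x := ⟨datF N x.1 x.2, memℓp_gen (by simpa using (datF_hasSum N x.1 x.2).summable)⟩
  map_add' x y := by
    ext i
    change datF N (x + y).1 (x + y).2 i = datF N x.1 x.2 i + datF N y.1 y.2 i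
    rcases i with (i | i) | i <;> simp [datF]
  map_smul' c x := by
    ext i
    change datF N (c • x).1 (c • x).2 i = c • datF N x.1 x.2 i
    rcases i with (i | i) | i <;> simp [datF]

theorem datL_bound (N : ℕ) (x : (Fin N → ℝ) × (lp (fun _ : ℕ => ℂ) 2)) :
    ‖datL N x‖ ≤ Real.sqrt (N + 2) * ‖x‖ := by
  have h := lp.hasSum_norm (p := 2) (by norm_num) (datL N x)
  have h' : HasSum (fun n => ‖datL N x n‖ ^ 2) (‖datL N x‖ ^ 2) := by
    simpa using h
  have e := h'.unique (datF_hasSum N x.1 x.2)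
  refine le_of_sq_le_sq ?_ (by positivity)
  rw [e, mul_pow, Real.sq_sqrt (by positivity)]
  have h1 : ‖x.2‖ ^ 2 ≤ ‖x‖ ^ 2 := by gcongr; exact norm_snd_le x
  have h2 : ∑ i, ‖x.1 i‖ ^ 2 ≤ ∑ i : Fin N, ‖x‖ ^ 2 := by
    refine Finset.sum_le_sum fun i _ => ?_
    gcongr
    exact (norm_le_pi_norm _ i).trans (norm_fst_le x)
  simp only [Finset.sum_const, Finset.card_univ, Fintype.card_fin, nsmul_eq_mul] at h2
  linarith

noncomputable def datC (N : ℕ) : ((Fin N → ℝ) × (lp (fun _ : ℕ => ℂ) 2)) →L[ℝ]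
    lp (fun _ : ℤ ⊕ Fin N => ℂ) 2 :=
  (datL N).mkContinuous _ (datL_bound N)

theorem mom (T : ℝ) (f : C(ℝ, ℂ)) (v : Lp ℂ 2 (volume.restrict (Set.Ioo 0 T))) :
    Integrable (fun t => v t * (starRingEnd ℂ) (f t)) (volume.restrict (Set.Ioo 0 T)) ∧
    ∫ t in Set.Ioo 0 T, v t * (starRingEnd ℂ) (f t) = inner ℂ (Phi T f) v := by
  have h : (fun t => inner ℂ (Phi T f t) (v t)) =ᵐ[volume.restrict (Set.Ioo 0 T)]
      fun t => v t * (starRingEnd ℂ) (f t) := by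
    filter_upwards [(cont_memLp T f f.continuous).coeFn_toLp] with t ht
    change inner ℂ ((cont_memLp T f f.continuous).toLp f t) (v t) = _
    rw [ht]
    rfl
  refine ⟨(L2.integrable_inner (𝕜 := ℂ) (Phi T f) v).congr h, ?_⟩
  rw [L2.inner_def]
  exact (integral_congr_ae h).symm

theorem stmt_18 (T : ℝ) (hT : 0 < T) (N : ℕ) (ω : ℕ → ℝ)
    (hpos : ∀ k, 0 < ω k) (hmono : StrictMono ω)
    (hgap : Filter.Tendsto (fun k => ω (k + 1) - ω k) Filter.atTop Filter.atTop) :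
    ∃ L : ((Fin N → ℝ) × (lp (fun _ : ℕ => ℂ) 2)) →L[ℝ]
        (MeasureTheory.Lp ℝ 2 (MeasureTheory.volume.restrict (Set.Ioo 0 T))),
      ∀ (dt : Fin N → ℝ) (d : lp (fun _ : ℕ => ℂ) 2),
        (∀ k : ℕ, (∫ t in Set.Ioo (0:ℝ) T,
            ((L (dt, d) t : ℝ) : ℂ) * Complex.exp (Complex.I * (ω k) * t)) = d k) ∧
        (∀ k : Fin N, (∫ t in Set.Ioo (0:ℝ) T,
            t ^ (k : ℕ) * L (dt, d) t) = dt k) := by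
  have hfin := lamZ_fin ω hpos hgap
  have hall := low_all (lamZ ω) (lamZ_inj ω hpos hmono) hfin (lamZ_gap ω hpos hgap)
  have hlow := low_poly (lamZ ω) hfin (lamZ_ne ω hpos) (fun T hT => (hall T hT).2) N T hT
  obtain ⟨c, C, hc, h1, h2⟩ := sys_riesz (lamZ ω) N T hT (hall T hT).1 hlow
  obtain ⟨L, hL⟩ := riesz_right_inverse (fun i => Phi T (sysE (lamZ ω) N i)) c C hc h1 h2
  refine ⟨(ContinuousLinearMap.compLpL 2 (volume.restrict (Set.Ioo 0 T)) Complex.reCLM).comp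
    ((L.restrictScalars ℝ).comp (datC N)), fun dt d => ?_⟩
  set v := L (datC N (dt, d)) with hv
  have hre : ∀ᵐ t ∂(volume.restrict (Set.Ioo 0 T)),
      ((ContinuousLinearMap.compLpL 2 (volume.restrict (Set.Ioo 0 T)) Complex.reCLM).comp
        ((L.restrictScalars ℝ).comp (datC N))) (dt, d) t = (v t).re := by
    filter_upwards [ContinuousLinearMap.coeFn_compLpL (p := 2) Complex.reCLM v] with t ht
    exact ht
  have hM : ∀ i, inner ℂ (Phi T (sysE (lamZ ω) N i)) v = datF N dt d i := fun i => hL _ i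
  constructor
  · intro k
    have ep := mom T (exC (ω k)) v
    have em := mom T (exC (-ω k)) v
    have hp : inner ℂ (Phi T (exC (ω k))) v = (starRingEnd ℂ) (d k) := hM (Sum.inl (Int.ofNat k))
    have hm : inner ℂ (Phi T (exC (-ω k))) v = d k := hM (Sum.inl (Int.negSucc k))
    have key : ∀ᵐ t ∂(volume.restrict (Set.Ioo 0 T)),
        ((((ContinuousLinearMap.compLpL 2 (volume.restrict (Set.Ioo 0 T)) Complex.reCLM).comp
        ((L.restrictScalars ℝ).comp (datC N))) (dt, d) t : ℝ) : ℂ)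
          * Complex.exp (Complex.I * (ω k) * t) =
        (1 / 2 : ℂ) * (v t * (starRingEnd ℂ) (exC (-ω k) t)
          + (starRingEnd ℂ) (v t * (starRingEnd ℂ) (exC (ω k) t))) := by
      filter_upwards [hre] with t ht
      rw [ht]
      have e1 : (starRingEnd ℂ) (exC (-ω k) t) = Complex.exp (Complex.I * (ω k) * t) := by
        simp [exC, ex, ← Complex.exp_conj]
      have e2 : exC (ω k) t = Complex.exp (Complex.I * (ω k) * t) := rfl
      rw [map_mul, Complex.conj_conj, e1, e2, Complex.re_eq_add_conj]
      ring
    rw [integral_congr_ae key, integral_const_mul, integral_add em.1, integral_conj, em.2, ep.2, hp, hm,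
      Complex.conj_conj]
    · ring
    · exact (Complex.conjCLE.toContinuousLinearMap.integrable_comp ep.1)
  · intro k
    have ep := mom T (polyC k) v
    have hp : inner ℂ (Phi T (polyC k)) v = (dt k : ℂ) := hM (Sum.inr k)
    have key : ∀ᵐ t ∂(volume.restrict (Set.Ioo 0 T)),
        t ^ (k : ℕ) * ((ContinuousLinearMap.compLpL 2 (volume.restrict (Set.Ioo 0 T)) Complex.reCLM).comp
        ((L.restrictScalars ℝ).comp (datC N))) (dt, d) t =
        Complex.reCLM (v t * (starRingEnd ℂ) (polyC k t)) := by
      filter_upwards [hre] with t ht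
      rw [ht]
      have e1 : (starRingEnd ℂ) (polyC k t) = ((t ^ (k : ℕ) : ℝ) : ℂ) := by
        simp [polyC]
      rw [e1, Complex.reCLM_apply, Complex.re_mul_ofReal, mul_comm]
    rw [integral_congr_ae key, ContinuousLinearMap.integral_comp_comm _ ep.1, ep.2, hp]
    simp
end

section
/- Let $A$ denote the Dirichlet Laplacian on $(0,1)$, i.e. $A\varphi = -\varphi''$ with domain $H^2\cap H^1_0$. For $T>0$ and $f\in L^2((0,T), H^3\cap H^1_0(0,1))$, the function $G(t) := \int_0^t e^{iAs}f(s)\,ds$ belongs to $C^0([0,T], H^3_{(0)}(0,1))$ and satisfies $\|G\|_{L^\infty((0,T),H^3_{(0)})} \leq c_1(T)\|f\|_{L^2((0,T),H^3\cap H^1_0)}$, with $c_1(T)$ uniformly bounded for $T$ in bounded intervals. -/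
open MeasureTheory Set

/-- `n`-th coefficient of `f(s,·)` in the orthonormal sine basis
`e_n(x) = √2 sin((n+1)πx)` of `L²(0,1)` (eigenbasis of the Dirichlet Laplacian `A`). -/
noncomputable def coefA (f : ℝ → ℝ → ℂ) (n : ℕ) (s : ℝ) : ℂ :=
  ∫ x in (0:ℝ)..1, f s x * (Real.sqrt 2 * Real.sin (((n : ℝ) + 1) * Real.pi * x))

/-- `n`-th coefficient of `G(t) = ∫₀ᵗ e^{iAs} f(s) ds` in the sine basis:
`e^{iAs}` multiplies the `n`-th coefficient by `e^{i(n+1)²π²s}`. -/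
noncomputable def coefG (f : ℝ → ℝ → ℂ) (n : ℕ) (t : ℝ) : ℂ :=
  ∫ s in (0:ℝ)..t,
    Complex.exp (Complex.I * (((n : ℝ) + 1) ^ 2 * Real.pi ^ 2 * s)) * coefA f n s

/-- Squared `H³ ∩ H¹₀(0,1)`-type norm of `f(s,·)` (sum of the `L²` norms of `f` and its
first three spatial derivatives). -/
noncomputable def sobNormSq (f D1 D2 D3 : ℝ → ℝ → ℂ) (s : ℝ) : ℝ :=
  ∫ x in (0:ℝ)..1, (‖f s x‖ ^ 2 + ‖D1 s x‖ ^ 2 + ‖D2 s x‖ ^ 2 + ‖D3 s x‖ ^ 2)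

lemma aux_bessel {L a b : ℝ} (hL : 0 < L) (ha : 0 ≤ a) (hab : a ≤ b) (hb : b ≤ L) (h : ℝ → ℂ)
    (hh : MemLp h 2 (volume.restrict (Ioc a b))) (e : ℕ → ℤ) (he : Function.Injective e) (N : ℕ) :
    ∑ n ∈ Finset.range N,
      ‖∫ s in a..b, Complex.exp (2 * Real.pi * Complex.I * (e n) * s / L) * h s‖ ^ 2
      ≤ L * ∫ s in a..b, ‖h s‖ ^ 2 := by
  set g : ℝ → ℂ := (Ioc a b).indicator h with hg
  have hsub : Ioc a b ⊆ Ioc 0 L := Ioc_subset_Ioc ha hb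
  have hgL : MemLp g 2 (volume.restrict (Ioc 0 L)) := by
    have : MemLp g 2 volume := (memLp_indicator_iff_restrict measurableSet_Ioc).2 hh
    exact this.restrict _
  have key := hasSum_sq_fourierCoeffOn hL hgL
  have h1 : ∀ n : ℤ, fourierCoeffOn hL g (-n) = (1 / L) •
      ∫ s in a..b, Complex.exp (2 * Real.pi * Complex.I * n * s / L) * h s := by
    intro n
    rw [fourierCoeffOn_eq_integral, sub_zero]
    congr 1
    rw [intervalIntegral.integral_of_le hL.le, intervalIntegral.integral_of_le hab]
    have : (fun x : ℝ => (fourier (- -n) (x : AddCircle (L - 0))) • g x) =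
      (Ioc a b).indicator (fun s : ℝ => Complex.exp (2 * Real.pi * Complex.I * n * s / L) * h s) := by
      ext x
      rw [fourier_coe_apply, hg]
      by_cases hx : x ∈ Ioc a b <;> simp [hx]
    rw [sub_zero] at this
    rw [this, setIntegral_indicator measurableSet_Ioc, inter_eq_right.2 hsub]
  have h2 : ∫ x in (0:ℝ)..L, ‖g x‖ ^ 2 = ∫ s in a..b, ‖h s‖ ^ 2 := by
    rw [intervalIntegral.integral_of_le hL.le, intervalIntegral.integral_of_le hab]
    have : (fun x : ℝ => ‖g x‖ ^ 2) = (Ioc a b).indicator (fun s : ℝ => ‖h s‖ ^ 2) := by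
      ext x
      rw [hg]
      by_cases hx : x ∈ Ioc a b <;> simp [hx]
    rw [this, setIntegral_indicator measurableSet_Ioc, inter_eq_right.2 hsub]
  have he' : Function.Injective (fun n => - e n) := fun x y hxy => he (neg_injective hxy)
  have h3 : ∑ n ∈ Finset.range N, ‖fourierCoeffOn hL g (- e n)‖ ^ 2
      ≤ (L - 0)⁻¹ • ∫ x in (0:ℝ)..L, ‖g x‖ ^ 2 := by
    have := sum_le_hasSum ((Finset.range N).map ⟨_, he'⟩) (fun i _ => by positivity) key
    simpa using this
  rw [h2, sub_zero, smul_eq_mul] at h3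
  simp_rw [h1, norm_smul, mul_pow] at h3
  rw [← Finset.mul_sum] at h3
  have h4 : ‖1 / L‖ ^ 2 = L⁻¹ * L⁻¹ := by
    rw [Real.norm_eq_abs, sq_abs]; ring
  rw [h4, mul_assoc] at h3
  have h5 := le_of_mul_le_mul_left h3 (inv_pos.2 hL)
  rwa [inv_mul_le_iff₀ hL] at h5

lemma aux_cs {a b : ℝ} (hab : a ≤ b) (u : ℝ → ℝ) (hu : IntervalIntegrable u volume a b)
    (hu2 : IntervalIntegrable (fun x => u x ^ 2) volume a b) :
    (∫ x in a..b, u x) ^ 2 ≤ (b - a) * ∫ x in a..b, u x ^ 2 := by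
  rcases hab.eq_or_lt with rfl | hlt
  · simp
  set I := ∫ x in a..b, u x with hI
  have h0 : 0 ≤ ∫ x in a..b, ((b - a) * u x - I) ^ 2 :=
    intervalIntegral.integral_nonneg hab (fun x _ => sq_nonneg _)
  have h1 : ∫ x in a..b, ((b - a) * u x - I) ^ 2 =
      (b - a) ^ 2 * (∫ x in a..b, u x ^ 2) - 2 * (b - a) * I * I + (b - a) * I ^ 2 := by
    have : (fun x => ((b - a) * u x - I) ^ 2) =
      fun x => ((b - a) ^ 2 * u x ^ 2 - 2 * (b - a) * I * u x) + I ^ 2 := by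
      ext x; ring
    rw [this, intervalIntegral.integral_add ((hu2.const_mul _).sub (hu.const_mul _)) (by simp),
      intervalIntegral.integral_sub (hu2.const_mul _) (hu.const_mul _)]
    simp [hI]
  rw [h1] at h0
  have hpos : 0 < b - a := sub_pos.2 hlt
  have : 0 ≤ (b - a) * ((b - a) * (∫ x in a..b, u x ^ 2) - I ^ 2) := by nlinarith
  have := nonneg_of_mul_nonneg_right this hpos
  linarith

/-- cosine coefficient -/
noncomputable def auxC (g : ℝ → ℂ) (n : ℕ) : ℂ :=
  ∫ x in (0:ℝ)..1, g x * (Real.cos (((n : ℝ) + 1) * Real.pi * x) : ℂ)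

lemma aux_cos {g : ℝ → ℂ} (hg : ContinuousOn g (Icc 0 1)) (N : ℕ) :
    ∑ n ∈ Finset.range N, ‖auxC g n‖ ^ 2 ≤ 2 * ∫ x in (0:ℝ)..1, ‖g x‖ ^ 2 := by
  have hL : MemLp g 2 (volume.restrict (Ioc 0 1)) := by
    have : MemLp g 2 (volume.restrict (Icc 0 1)) :=
      (memLp_two_iff_integrable_sq_norm (hg.aestronglyMeasurable measurableSet_Icc)).2
        ((hg.norm.pow 2).integrableOn_compact isCompact_Icc)
    exact this.mono_measure (Measure.restrict_mono Ioc_subset_Icc_self le_rfl)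
  have hii : ∀ k : ℤ, IntervalIntegrable
      (fun x : ℝ => Complex.exp (2 * Real.pi * Complex.I * k * x / (2:ℝ)) * g x) volume 0 1 := by
    intro k
    apply ContinuousOn.intervalIntegrable
    rw [uIcc_of_le zero_le_one]
    exact ContinuousOn.mul (by fun_prop) hg
  have b1 := aux_bessel (L := 2) (by norm_num) le_rfl zero_le_one (by norm_num) g hL
    (fun n => (n : ℤ) + 1) (fun x y h => by simpa using h) N
  have b2 := aux_bessel (L := 2) (by norm_num) le_rfl zero_le_one (by norm_num) g hL
    (fun n => -((n : ℤ) + 1)) (fun x y h => by simpa using h) N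
  have h3 : ∀ n : ℕ, ‖auxC g n‖ ^ 2 ≤ 1 / 2 *
     (‖∫ s in (0:ℝ)..1, Complex.exp (2 * Real.pi * Complex.I * (((n:ℤ) + 1 : ℤ)) * s / (2:ℝ)) * g s‖ ^ 2
     + ‖∫ s in (0:ℝ)..1, Complex.exp (2 * Real.pi * Complex.I * ((-((n:ℤ) + 1) : ℤ)) * s / (2:ℝ)) * g s‖ ^ 2) := by
    intro n
    have : auxC g n = 1 / 2 * ((∫ s in (0:ℝ)..1, Complex.exp (2 * Real.pi * Complex.I * (((n:ℤ) + 1 : ℤ)) * s / (2:ℝ)) * g s)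
      + ∫ s in (0:ℝ)..1, Complex.exp (2 * Real.pi * Complex.I * ((-((n:ℤ) + 1) : ℤ)) * s / (2:ℝ)) * g s) := by
      rw [← intervalIntegral.integral_add (hii _) (hii _), ← intervalIntegral.integral_const_mul]
      unfold auxC
      congr 1
      ext x
      rw [Complex.ofReal_cos, Complex.cos]
      push_cast
      have e1 : 2 * (Real.pi:ℂ) * Complex.I * (n + 1) * x / 2 = (n + 1) * Real.pi * x * Complex.I := by ring
      have e3 : 2 * (Real.pi:ℂ) * Complex.I * (-(n + 1)) * x / 2 = -((n + 1) * Real.pi * x) * Complex.I := by ring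
      simp only [e1, e3]
      ring
    rw [this, norm_mul, mul_pow]
    set A := ∫ s in (0:ℝ)..1, Complex.exp (2 * Real.pi * Complex.I * (((n:ℤ) + 1 : ℤ)) * s / (2:ℝ)) * g s
    set B := ∫ s in (0:ℝ)..1, Complex.exp (2 * Real.pi * Complex.I * ((-((n:ℤ) + 1) : ℤ)) * s / (2:ℝ)) * g s
    have hn := norm_add_le A B
    have : ‖A + B‖ ^ 2 ≤ (‖A‖ + ‖B‖) ^ 2 := by gcongr
    have h4 : ‖(1/2:ℂ)‖ ^ 2 = 1 / 4 := by norm_num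
    rw [h4]
    nlinarith [sq_nonneg (‖A‖ - ‖B‖)]
  calc _ ≤ _ := Finset.sum_le_sum (fun n _ => h3 n)
    _ ≤ _ := by
      rw [← Finset.mul_sum, Finset.sum_add_distrib]
      linarith

lemma aux_cos_tendsto {g : ℝ → ℂ} (hg : ContinuousOn g (Icc 0 1)) :
    Filter.Tendsto (auxC g) Filter.atTop (nhds 0) := by
  have h := (summable_of_sum_range_le (fun n => by positivity) (aux_cos hg)).tendsto_atTop_zero
  rw [tendsto_zero_iff_norm_tendsto_zero]
  have := h.sqrt
  simpa using this

lemma aux_parts {f D1 D2 D3 : ℝ → ℂ} 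
    (hd : ∀ x ∈ Set.Icc (0:ℝ) 1,
          HasDerivAt f (D1 x) x ∧ HasDerivAt D1 (D2 x) x ∧ HasDerivAt D2 (D3 x) x)
    (hc : ContinuousOn D3 (Icc 0 1)) (h0 : f 0 = 0) (h1 : f 1 = 0) (n : ℕ) :
    ((((n:ℝ) + 1) * Real.pi) ^ 3 : ℂ) * (∫ x in (0:ℝ)..1, f x * (Real.sqrt 2 * Real.sin (((n : ℝ) + 1) * Real.pi * x)))
      = Real.sqrt 2 * ((-1) ^ (n + 1) * D2 1 - D2 0 - auxC D3 n) := by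
  have hu : uIcc (0:ℝ) 1 = Icc 0 1 := uIcc_of_le zero_le_one
  have c1 : ContinuousOn D1 (Icc 0 1) := fun x hx => (hd x hx).2.1.continuousAt.continuousWithinAt
  have c2 : ContinuousOn D2 (Icc 0 1) := fun x hx => (hd x hx).2.2.continuousAt.continuousWithinAt
  set w : ℝ := ((n:ℝ) + 1) * Real.pi with hw
  have hwpos : 0 < w := by positivity
  have hwC : (w:ℂ) ≠ 0 := by exact_mod_cast hwpos.ne'
  have dsin : ∀ x : ℝ, HasDerivAt (fun x : ℝ => ((Real.sin (w * x) : ℝ) : ℂ)) (w * (Real.cos (w * x) : ℝ)) x := by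
    intro x
    have : HasDerivAt (fun x : ℝ => Real.sin (w * x)) (Real.cos (w * x) * (w * 1)) x :=
      ((hasDerivAt_id x).const_mul w).sin
    convert this.ofReal_comp using 1
    push_cast; ring
  have dcos : ∀ x : ℝ, HasDerivAt (fun x : ℝ => ((Real.cos (w * x) : ℝ) : ℂ)) (-w * (Real.sin (w * x) : ℝ)) x := by
    intro x
    have : HasDerivAt (fun x : ℝ => Real.cos (w * x)) (-Real.sin (w * x) * (w * 1)) x :=
      ((hasDerivAt_id x).const_mul w).cos
    convert this.ofReal_comp using 1
    push_cast; ring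
  have is : IntervalIntegrable (fun x : ℝ => (w:ℂ) * (Real.cos (w * x) : ℝ)) volume 0 1 :=
    Continuous.intervalIntegrable (by fun_prop) _ _
  have ic : IntervalIntegrable (fun x : ℝ => (-w:ℂ) * (Real.sin (w * x) : ℝ)) volume 0 1 :=
    Continuous.intervalIntegrable (by fun_prop) _ _
  have s1 : Real.sin (w * 1) = 0 := by
    rw [mul_one, hw]; exact_mod_cast Real.sin_nat_mul_pi (n + 1)
  have k1 : Real.cos (w * 1) = (-1) ^ (n + 1) := by
    rw [mul_one, hw]; exact_mod_cast Real.cos_nat_mul_pi (n + 1)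
  have I1 := intervalIntegral.integral_mul_deriv_eq_deriv_mul (u := f) (u' := D1) (a := 0) (b := 1)
    (fun x hx => (hd x (hu ▸ hx)).1) (fun x _ => dcos x) (ContinuousOn.intervalIntegrable (hu ▸ c1)) ic
  have I2 := intervalIntegral.integral_mul_deriv_eq_deriv_mul (u := D1) (u' := D2) (a := 0) (b := 1)
    (fun x hx => (hd x (hu ▸ hx)).2.1) (fun x _ => dsin x) (ContinuousOn.intervalIntegrable (hu ▸ c2)) is
  have I3 := intervalIntegral.integral_mul_deriv_eq_deriv_mul (u := D2) (u' := D3) (a := 0) (b := 1)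
    (fun x hx => (hd x (hu ▸ hx)).2.2) (fun x _ => dcos x) (ContinuousOn.intervalIntegrable (hu ▸ hc)) ic
  have e : ∀ (g q : ℝ → ℂ) (c : ℂ), ∫ x in (0:ℝ)..1, g x * (c * q x) = c * ∫ x in (0:ℝ)..1, g x * q x := by
    intro g q c
    rw [← intervalIntegral.integral_const_mul]
    congr 1; ext x; ring
  rw [e] at I1 I2 I3
  rw [s1] at I2
  rw [k1] at I3 I1
  rw [h0, h1] at I1
  simp only [mul_zero, Real.sin_zero, Real.cos_zero, Complex.ofReal_zero, sub_zero, zero_sub, zero_mul, Complex.ofReal_one, mul_one] at I1 I2 I3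
  have e0 := e f (fun x => ((Real.sin (w * x) : ℝ) : ℂ)) (Real.sqrt 2 : ℂ)
  have hcast : (((n:ℝ) + 1) * Real.pi : ℂ) = w := by rw [hw]; push_cast; ring
  rw [hcast]
  have hc' : auxC D3 n = ∫ x in (0:ℝ)..1, D3 x * (Real.cos (w * x) : ℝ) := rfl
  rw [hc', e0]
  push_cast at I1 I2 I3 ⊢
  linear_combination (Real.sqrt 2 : ℂ) * (-w^2 * I1 + w * I2 + I3)

lemma aux_trace {D2 D3 : ℝ → ℂ} (hd : ∀ x ∈ Set.Icc (0:ℝ) 1, HasDerivAt D2 (D3 x) x)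
    (hc : ContinuousOn D3 (Icc 0 1)) (y : ℝ) (hy : y = 0 ∨ y = 1) :
    ‖D2 y‖ ^ 2 ≤ 2 * ∫ x in (0:ℝ)..1, (‖D2 x‖ ^ 2 + ‖D3 x‖ ^ 2) := by
  have hu : uIcc (0:ℝ) 1 = Icc 0 1 := uIcc_of_le zero_le_one
  have c2 : ContinuousOn D2 (Icc 0 1) := fun x hx => (hd x hx).continuousAt.continuousWithinAt
  have key : ‖D2 y‖ ≤ ∫ x in (0:ℝ)..1, (‖D2 x‖ + ‖D3 x‖) := by
    have H := intervalIntegral.integral_deriv_mul_eq_sub (a := 0) (b := 1) (u := D2) (u' := D3)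
      (v := fun x : ℝ => ((x + y - 1 : ℝ) : ℂ)) (v' := fun _ => 1)
      (fun x hx => hd x (hu ▸ hx)) (fun x _ => by
        have : HasDerivAt (fun x : ℝ => x + y - 1) 1 x := by
          simpa using ((hasDerivAt_id x).add_const y).sub_const 1
        simpa using this.ofReal_comp) (ContinuousOn.intervalIntegrable (hu ▸ hc)) (by simp)
    have : ‖D2 y‖ = ‖∫ x in (0:ℝ)..1, (D3 x * ((x + y - 1 : ℝ) : ℂ) + D2 x * 1)‖ := by
      rw [H]
      rcases hy with rfl | rfl <;> simp
    rw [this]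
    refine intervalIntegral.norm_integral_le_of_norm_le zero_le_one ?_ ?_
    · refine Filter.Eventually.of_forall fun x hx => ?_
      refine (norm_add_le _ _).trans ?_
      rw [mul_one, norm_mul, add_comm]
      have : ‖((x + y - 1 : ℝ) : ℂ)‖ ≤ 1 := by
        rw [Complex.norm_real, Real.norm_eq_abs, abs_le]
        rcases hy with rfl | rfl <;> constructor <;> linarith [hx.1, hx.2]
      have := mul_le_mul_of_nonneg_left this (norm_nonneg (D3 x))
      linarith
    · apply ContinuousOn.intervalIntegrable
      rw [hu]
      exact c2.norm.add hc.norm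
  have cs := aux_cs zero_le_one (fun x => ‖D2 x‖ + ‖D3 x‖)
    (ContinuousOn.intervalIntegrable (hu ▸ c2.norm.add hc.norm))
    (ContinuousOn.intervalIntegrable (hu ▸ (c2.norm.add hc.norm).pow 2))
  have : ‖D2 y‖ ^ 2 ≤ (∫ x in (0:ℝ)..1, (‖D2 x‖ + ‖D3 x‖)) ^ 2 := by gcongr
  refine this.trans (cs.trans ?_)
  rw [sub_zero, one_mul, ← intervalIntegral.integral_const_mul]
  apply intervalIntegral.integral_mono_on zero_le_one
  · exact (ContinuousOn.intervalIntegrable (hu ▸ (c2.norm.add hc.norm).pow 2))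
  · exact (ContinuousOn.intervalIntegrable (hu ▸ ((c2.norm.pow 2).add (hc.norm.pow 2)).const_mul 2))
  · intro x _
    nlinarith [sq_nonneg (‖D2 x‖ - ‖D3 x‖)]

lemma aux_time {a b L : ℝ} {M : ℕ} (hM : 0 < M) (hL : L = 2 * M / Real.pi) (ha : 0 ≤ a)
    (hab : a ≤ b) (hb : b ≤ L) (S : ℝ → ℝ) (P Q : ℝ → ℂ) (C : ℕ → ℝ → ℂ)
    (hS : IntervalIntegrable S volume a b)
    (mP : AEStronglyMeasurable P (volume.restrict (Ioc a b)))
    (mQ : AEStronglyMeasurable Q (volume.restrict (Ioc a b)))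
    (mC : ∀ n, AEStronglyMeasurable (C n) (volume.restrict (Ioc a b)))
    (bP : ∀ s ∈ Ioc a b, ‖P s‖ ^ 2 ≤ 2 * S s) (bQ : ∀ s ∈ Ioc a b, ‖Q s‖ ^ 2 ≤ 2 * S s)
    (bC : ∀ N, ∀ s ∈ Ioc a b, ∑ n ∈ Finset.range N, ‖C n s‖ ^ 2 ≤ 2 * S s) (N : ℕ) :
    ∑ n ∈ Finset.range N, ‖∫ s in a..b,
      Complex.exp (Complex.I * (((n : ℝ) + 1) ^ 2 * Real.pi ^ 2 * s)) *
        ((-1) ^ (n + 1) * P s - Q s - C n s)‖ ^ 2 ≤ 18 * L * ∫ s in a..b, S s := by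
  have hpi := Real.pi_pos
  have hMr : (0:ℝ) < M := by exact_mod_cast hM
  have hLpos : 0 < L := by rw [hL]; positivity
  have hS' : Integrable S (volume.restrict (Ioc a b)) :=
    (intervalIntegrable_iff_integrableOn_Ioc_of_le hab).1 hS
  have memL : ∀ h : ℝ → ℂ, AEStronglyMeasurable h (volume.restrict (Ioc a b)) →
      (∀ s ∈ Ioc a b, ‖h s‖ ^ 2 ≤ 2 * S s) → MemLp h 2 (volume.restrict (Ioc a b)) := by
    intro h hm hb
    rw [memLp_two_iff_integrable_sq_norm hm]
    refine (hS'.const_mul 2).mono' (hm.norm.pow 2) ?_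
    refine (ae_restrict_iff' measurableSet_Ioc).2 (Filter.Eventually.of_forall fun s hs => ?_)
    rw [Real.norm_of_nonneg (by positivity)]
    exact hb s hs
  have intsq : ∀ h : ℝ → ℂ, MemLp h 2 (volume.restrict (Ioc a b)) →
      IntervalIntegrable (fun s => ‖h s‖ ^ 2) volume a b := fun h hm =>
    (intervalIntegrable_iff_integrableOn_Ioc_of_le hab).2
      ((memLp_two_iff_integrable_sq_norm hm.1).1 hm)
  have int1 : ∀ h : ℝ → ℂ, MemLp h 2 (volume.restrict (Ioc a b)) →
      IntervalIntegrable h volume a b := fun h hm =>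
    (intervalIntegrable_iff_integrableOn_Ioc_of_le hab).2 (hm.integrable (by norm_num))
  have bC1 : ∀ n, ∀ s ∈ Ioc a b, ‖C n s‖ ^ 2 ≤ 2 * S s := by
    intro n s hs
    refine le_trans ?_ (bC (n + 1) s hs)
    exact Finset.single_le_sum (f := fun n => ‖C n s‖ ^ 2) (fun i _ => by positivity)
      (Finset.self_mem_range_succ n)
  have lP := memL P mP bP
  have lQ := memL Q mQ bQ
  have lC := fun n => memL (C n) (mC n) (bC1 n)
  have sqle : ∀ h : ℝ → ℂ, MemLp h 2 (volume.restrict (Ioc a b)) →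
      (∀ s ∈ Ioc a b, ‖h s‖ ^ 2 ≤ 2 * S s) → ∫ s in a..b, ‖h s‖ ^ 2 ≤ 2 * ∫ s in a..b, S s := by
    intro h hm hb
    rw [← intervalIntegral.integral_const_mul]
    refine intervalIntegral.integral_mono_on_of_le_Ioo hab (intsq h hm) (hS.const_mul 2) ?_
    exact fun s hs => hb s (Ioo_subset_Ioc_self hs)
  set E : ℕ → ℝ → ℂ := fun n s =>
    Complex.exp (Complex.I * (((n : ℝ) + 1) ^ 2 * Real.pi ^ 2 * s)) with hE
  have hEc : ∀ n, Continuous (E n) := by intro n; rw [hE]; fun_prop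
  have hE1 : ∀ n s, ‖E n s‖ = 1 := by
    intro n s
    have : Complex.I * (((n : ℝ) + 1) ^ 2 * Real.pi ^ 2 * s) =
      ((((n : ℝ) + 1) ^ 2 * Real.pi ^ 2 * s : ℝ) : ℂ) * Complex.I := by push_cast; ring
    simp only [hE]
    rw [this, Complex.norm_exp_ofReal_mul_I]
  have hE2 : ∀ (n : ℕ) (s : ℝ), Complex.exp (2 * Real.pi * Complex.I * ((((n:ℤ) + 1) ^ 2 * M : ℤ)) * s / L)
      = E n s := by
    intro n s
    simp only [hE]
    congr 1
    rw [hL]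
    have h1 : (Real.pi : ℂ) ≠ 0 := by exact_mod_cast hpi.ne'
    have h2 : (M : ℂ) ≠ 0 := by exact_mod_cast hM.ne'
    push_cast
    field_simp
  have inj : Function.Injective (fun n : ℕ => ((n:ℤ) + 1) ^ 2 * (M:ℤ)) := by
    intro x y hxy
    have h2 : (M : ℤ) ≠ 0 := by exact_mod_cast hM.ne'
    have := mul_right_cancel₀ h2 hxy
    have := (sq_eq_sq₀ (by positivity) (by positivity)).1 this
    simpa using this
  have iE : ∀ n (h : ℝ → ℂ), MemLp h 2 (volume.restrict (Ioc a b)) →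
      IntervalIntegrable (fun s => E n s * h s) volume a b := fun n h hm =>
    (int1 h hm).continuousOn_mul (hEc n).continuousOn
  have BP := aux_bessel hLpos ha hab hb P lP _ inj N
  have BQ := aux_bessel hLpos ha hab hb Q lQ _ inj N
  simp only [hE2] at BP BQ
  have BC : ∑ n ∈ Finset.range N, ‖∫ s in a..b, E n s * C n s‖ ^ 2 ≤ L * (2 * ∫ s in a..b, S s) := by
    have h1 : ∀ n, ‖∫ s in a..b, E n s * C n s‖ ^ 2 ≤ L * ∫ s in a..b, ‖C n s‖ ^ 2 := by
      intro n
      have h2 : ‖∫ s in a..b, E n s * C n s‖ ≤ ∫ s in a..b, ‖C n s‖ := by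
        refine (intervalIntegral.norm_integral_le_integral_norm hab).trans (le_of_eq ?_)
        simp only [norm_mul, hE1, one_mul]
      have h3 := aux_cs hab (fun s => ‖C n s‖) (int1 _ (lC n)).norm (intsq _ (lC n))
      have h4 : 0 ≤ ∫ s in a..b, ‖C n s‖ ^ 2 :=
        intervalIntegral.integral_nonneg hab fun _ _ => by positivity
      calc _ ≤ (∫ s in a..b, ‖C n s‖) ^ 2 := by gcongr
        _ ≤ _ := h3
        _ ≤ _ := by gcongr; linarith
    refine (Finset.sum_le_sum fun n _ => h1 n).trans ?_
    rw [← Finset.mul_sum, ← intervalIntegral.integral_finsetSum (fun n _ => intsq _ (lC n)),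
      ← intervalIntegral.integral_const_mul 2]
    refine mul_le_mul_of_nonneg_left ?_ hLpos.le
    refine intervalIntegral.integral_mono_on_of_le_Ioo hab ?_ (hS.const_mul 2) ?_
    · have := IntervalIntegrable.sum (Finset.range N) (fun n _ => intsq _ (lC n))
      have e : (fun s => ∑ n ∈ Finset.range N, ‖C n s‖ ^ 2) =
          ∑ n ∈ Finset.range N, fun s => ‖C n s‖ ^ 2 := by
        ext s; simp
      rw [e]; exact this
    · exact fun s hs => bC N s (Ioo_subset_Ioc_self hs)
  have BP' := BP.trans (mul_le_mul_of_nonneg_left (sqle P lP bP) hLpos.le)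
  have BQ' := BQ.trans (mul_le_mul_of_nonneg_left (sqle Q lQ bQ) hLpos.le)
  have hn : ∀ n, ‖∫ s in a..b, E n s * ((-1) ^ (n + 1) * P s - Q s - C n s)‖ ^ 2 ≤
      3 * (‖∫ s in a..b, E n s * P s‖ ^ 2 + ‖∫ s in a..b, E n s * Q s‖ ^ 2 +
        ‖∫ s in a..b, E n s * C n s‖ ^ 2) := by
    intro n
    have : ∫ s in a..b, E n s * ((-1) ^ (n + 1) * P s - Q s - C n s) =
        (-1) ^ (n + 1) * (∫ s in a..b, E n s * P s) - (∫ s in a..b, E n s * Q s) -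
          ∫ s in a..b, E n s * C n s := by
      rw [← intervalIntegral.integral_const_mul, ← intervalIntegral.integral_sub
        ((iE n P lP).const_mul _) (iE n Q lQ), ← intervalIntegral.integral_sub
        (((iE n P lP).const_mul _).sub (iE n Q lQ)) (iE n _ (lC n))]
      congr 1; ext s; ring
    rw [this]
    set X := ∫ s in a..b, E n s * P s
    set Y := ∫ s in a..b, E n s * Q s
    set Z := ∫ s in a..b, E n s * C n s
    have h1 : ‖(-1) ^ (n + 1) * X - Y - Z‖ ≤ ‖X‖ + ‖Y‖ + ‖Z‖ := by
      refine (norm_sub_le _ _).trans ?_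
      gcongr
      refine (norm_sub_le _ _).trans ?_
      simp
    calc _ ≤ (‖X‖ + ‖Y‖ + ‖Z‖) ^ 2 := by gcongr
      _ ≤ _ := by nlinarith [sq_nonneg (‖X‖ - ‖Y‖), sq_nonneg (‖X‖ - ‖Z‖), sq_nonneg (‖Y‖ - ‖Z‖)]
  refine (Finset.sum_le_sum fun n _ => hn n).trans ?_
  rw [← Finset.mul_sum, Finset.sum_add_distrib, Finset.sum_add_distrib]
  linarith

lemma aux_main {T : ℝ} (f D1 D2 D3 : ℝ → ℝ → ℂ)
    (hd : ∀ s ∈ Set.Icc (0:ℝ) T, ∀ x ∈ Set.Icc (0:ℝ) 1,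
          HasDerivAt (f s) (D1 s x) x ∧ HasDerivAt (D1 s) (D2 s x) x ∧
          HasDerivAt (D2 s) (D3 s x) x)
    (hc : ∀ s ∈ Set.Icc (0:ℝ) T,
          ContinuousOn (D3 s) (Set.Icc 0 1) ∧ f s 0 = 0 ∧ f s 1 = 0)
    (hA : ∀ n : ℕ, IntervalIntegrable (coefA f n) MeasureTheory.volume 0 T)
    (hS : IntervalIntegrable (sobNormSq f D1 D2 D3) MeasureTheory.volume 0 T)
    {a b : ℝ} (ha : 0 ≤ a) (hab : a ≤ b) (hb : b ≤ T) (N : ℕ) :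
    ∑ n ∈ Finset.range N, (((n : ℝ) + 1) * Real.pi) ^ 6 * ‖∫ s in a..b,
      Complex.exp (Complex.I * (((n : ℝ) + 1) ^ 2 * Real.pi ^ 2 * s)) * coefA f n s‖ ^ 2 ≤
      (6 * (2 * (⌈T⌉₊ : ℝ) + 1)) ^ 2 * ∫ s in a..b, sobNormSq f D1 D2 D3 s := by
  have hT : 0 ≤ T := ha.trans (hab.trans hb)
  have hu : uIcc (0:ℝ) 1 = Icc 0 1 := uIcc_of_le zero_le_one
  have hsub : Ioc a b ⊆ Ioc 0 T := Ioc_subset_Ioc ha hb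
  have hsub' : Ioc a b ⊆ Icc 0 T := hsub.trans Ioc_subset_Icc_self
  set M : ℕ := 2 * ⌈T⌉₊ + 1 with hM
  set L : ℝ := 2 * M / Real.pi with hL
  have hMr : (M:ℝ) = 2 * (⌈T⌉₊ : ℝ) + 1 := by rw [hM]; push_cast; ring
  have hM1 : (1:ℝ) ≤ M := by rw [hMr]; linarith [Nat.cast_nonneg (α := ℝ) ⌈T⌉₊]
  have hTL : T ≤ L := by
    rw [hL, le_div_iff₀ Real.pi_pos, hMr]
    nlinarith [Nat.le_ceil T, Real.pi_le_four]
  have hLM : L ≤ M := by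
    rw [hL, div_le_iff₀ Real.pi_pos]
    nlinarith [Real.two_le_pi]
  set S := sobNormSq f D1 D2 D3 with hSdef
  have cont : ∀ s ∈ Icc (0:ℝ) T, ContinuousOn (f s) (Icc 0 1) ∧ ContinuousOn (D1 s) (Icc 0 1) ∧
      ContinuousOn (D2 s) (Icc 0 1) := fun s hs =>
    ⟨fun x hx => (hd s hs x hx).1.continuousAt.continuousWithinAt,
     fun x hx => (hd s hs x hx).2.1.continuousAt.continuousWithinAt,
     fun x hx => (hd s hs x hx).2.2.continuousAt.continuousWithinAt⟩
  have icS : ∀ s ∈ Icc (0:ℝ) T, IntervalIntegrable (fun x => ‖f s x‖ ^ 2 + ‖D1 s x‖ ^ 2 +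
      ‖D2 s x‖ ^ 2 + ‖D3 s x‖ ^ 2) volume 0 1 := by
    intro s hs
    obtain ⟨c0, c1, c2⟩ := cont s hs
    have c3 := (hc s hs).1
    apply ContinuousOn.intervalIntegrable
    rw [hu]
    fun_prop
  have bT : ∀ s ∈ Icc (0:ℝ) T, ∀ y : ℝ, y = 0 ∨ y = 1 → ‖D2 s y‖ ^ 2 ≤ 2 * S s := by
    intro s hs y hy
    obtain ⟨c0, c1, c2⟩ := cont s hs
    have c3 := (hc s hs).1
    refine (aux_trace (fun x hx => (hd s hs x hx).2.2) c3 y hy).trans ?_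
    refine mul_le_mul_of_nonneg_left ?_ zero_le_two
    refine intervalIntegral.integral_mono_on zero_le_one ?_ (icS s hs) ?_
    · apply ContinuousOn.intervalIntegrable
      rw [hu]
      fun_prop
    · intro x _
      nlinarith [sq_nonneg ‖f s x‖, sq_nonneg ‖D1 s x‖]
  have bC : ∀ s ∈ Icc (0:ℝ) T, ∀ N, ∑ n ∈ Finset.range N, ‖auxC (D3 s) n‖ ^ 2 ≤ 2 * S s := by
    intro s hs N
    have c3 := (hc s hs).1
    refine (aux_cos c3 N).trans ?_
    refine mul_le_mul_of_nonneg_left ?_ zero_le_two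
    refine intervalIntegral.integral_mono_on zero_le_one ?_ (icS s hs) ?_
    · apply ContinuousOn.intervalIntegrable
      rw [hu]
      fun_prop
    · intro x _
      nlinarith [sq_nonneg ‖f s x‖, sq_nonneg ‖D1 s x‖, sq_nonneg ‖D2 s x‖]
  have h2 : ((Real.sqrt 2 : ℝ) : ℂ) ≠ 0 := by
    have : Real.sqrt 2 ≠ 0 := by positivity
    exact_mod_cast this
  -- rescaled coefficients
  set B : ℕ → ℝ → ℂ := fun n s =>
    ((((n:ℝ) + 1) * Real.pi) ^ 3 : ℂ) / (Real.sqrt 2 : ℝ) * coefA f n s with hB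
  have hBeq : ∀ n, ∀ s ∈ Icc (0:ℝ) T,
      B n s = (-1) ^ (n + 1) * D2 s 1 - D2 s 0 - auxC (D3 s) n := by
    intro n s hs
    have := aux_parts (hd s hs) (hc s hs).1 (hc s hs).2.1 (hc s hs).2.2 n
    simp only [hB, coefA]
    rw [div_mul_eq_mul_div, this, mul_div_cancel_left₀ _ h2]
  have mB : ∀ n, AEStronglyMeasurable (B n) (volume.restrict (Ioc a b)) := by
    intro n
    have h1 : AEStronglyMeasurable (coefA f n) (volume.restrict (Ioc 0 T)) :=
      ((intervalIntegrable_iff_integrableOn_Ioc_of_le hT).1 (hA n)).1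
    exact (h1.mono_measure (Measure.restrict_mono hsub le_rfl)).const_mul _
  have mlim : ∀ r : ℕ, AEStronglyMeasurable (fun s => (-1) ^ (r + 1) * D2 s 1 - D2 s 0)
      (volume.restrict (Ioc a b)) := by
    intro r
    refine aestronglyMeasurable_of_tendsto_ae (u := Filter.atTop) (f := fun m => B (2 * m + r))
      (fun m => mB _) ?_
    refine (ae_restrict_iff' measurableSet_Ioc).2 (Filter.Eventually.of_forall fun s hs => ?_)
    have hs' := hsub' hs
    have ht : Filter.Tendsto (fun m : ℕ => 2 * m + r) Filter.atTop Filter.atTop :=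
      Filter.tendsto_atTop_mono (fun m => by simp only [id]; omega) Filter.tendsto_id
    have h3 := ((aux_cos_tendsto (hc s hs').1).comp ht).const_sub ((-1) ^ (r + 1) * D2 s 1 - D2 s 0)
    rw [sub_zero] at h3
    refine h3.congr fun m => ?_
    rw [hBeq _ s hs']
    have : (-1 : ℂ) ^ (2 * m + r + 1) = (-1) ^ (r + 1) := by
      rw [add_assoc, pow_add, pow_mul]; simp
    rw [this]; rfl
  have mQ : AEStronglyMeasurable (fun s => D2 s 0) (volume.restrict (Ioc a b)) := by
    have := ((mlim 0).add (mlim 1)).const_mul (-1/2 : ℂ)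
    convert this using 1
    ext s; simp only [Pi.add_apply]; ring
  have mP : AEStronglyMeasurable (fun s => D2 s 1) (volume.restrict (Ioc a b)) := by
    have := (mlim 1).add mQ
    convert this using 1
    ext s; simp only [Pi.add_apply]; ring
  have mC : ∀ n, AEStronglyMeasurable (fun s => auxC (D3 s) n) (volume.restrict (Ioc a b)) := by
    intro n
    refine ((mlim n).sub (mB n)).congr ?_
    refine (ae_restrict_iff' measurableSet_Ioc).2 (Filter.Eventually.of_forall fun s hs => ?_)
    simp only [Pi.sub_apply]
    rw [hBeq n s (hsub' hs)]; ring
  have hSab : IntervalIntegrable S volume a b := by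
    apply hS.mono_set
    rw [uIcc_of_le hab, uIcc_of_le hT]
    exact Icc_subset_Icc ha hb
  have key := aux_time (by omega : 0 < M) hL ha hab (hb.trans hTL) S (fun s => D2 s 1)
    (fun s => D2 s 0) (fun n s => auxC (D3 s) n) hSab mP mQ mC
    (fun s hs => bT s (hsub' hs) 1 (Or.inr rfl)) (fun s hs => bT s (hsub' hs) 0 (Or.inl rfl))
    (fun N s hs => bC s (hsub' hs) N) N
  have hn : ∀ n : ℕ, (((n : ℝ) + 1) * Real.pi) ^ 6 * ‖∫ s in a..b,
      Complex.exp (Complex.I * (((n : ℝ) + 1) ^ 2 * Real.pi ^ 2 * s)) * coefA f n s‖ ^ 2 =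
      2 * ‖∫ s in a..b, Complex.exp (Complex.I * (((n : ℝ) + 1) ^ 2 * Real.pi ^ 2 * s)) *
        ((-1) ^ (n + 1) * D2 s 1 - D2 s 0 - auxC (D3 s) n)‖ ^ 2 := by
    intro n
    have h4 : ∫ s in a..b, Complex.exp (Complex.I * (((n : ℝ) + 1) ^ 2 * Real.pi ^ 2 * s)) *
        ((-1) ^ (n + 1) * D2 s 1 - D2 s 0 - auxC (D3 s) n) =
        ((((n:ℝ) + 1) * Real.pi) ^ 3 : ℂ) / (Real.sqrt 2 : ℝ) * ∫ s in a..b,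
      Complex.exp (Complex.I * (((n : ℝ) + 1) ^ 2 * Real.pi ^ 2 * s)) * coefA f n s := by
      rw [← intervalIntegral.integral_const_mul]
      apply intervalIntegral.integral_congr
      intro s hs
      rw [uIcc_of_le hab] at hs
      have := hBeq n s ⟨ha.trans hs.1, hs.2.trans hb⟩
      simp only [← this, hB]
      ring
    have h5 : ‖((((n:ℝ) + 1) * Real.pi) ^ 3 : ℂ) / (Real.sqrt 2 : ℝ)‖ ^ 2 =
        (((n : ℝ) + 1) * Real.pi) ^ 6 / 2 := by
      have : ((((n:ℝ) + 1) * Real.pi) ^ 3 : ℂ) / (Real.sqrt 2 : ℝ) =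
        (((((n:ℝ) + 1) * Real.pi) ^ 3 / Real.sqrt 2 : ℝ) : ℂ) := by push_cast; rfl
      rw [this, Complex.norm_real, Real.norm_eq_abs, sq_abs, div_pow, Real.sq_sqrt zero_le_two]
      ring
    rw [h4, norm_mul, mul_pow ‖_‖ _ 2, h5]
    ring
  have hI : 0 ≤ ∫ s in a..b, S s := by
    refine intervalIntegral.integral_nonneg hab fun s _ => ?_
    exact intervalIntegral.integral_nonneg zero_le_one fun x _ => by positivity
  simp_rw [hn]
  rw [← Finset.mul_sum, ← hMr]
  calc _ ≤ 2 * (18 * L * ∫ s in a..b, S s) := by linarith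
    _ = (36 * L) * ∫ s in a..b, S s := by ring
    _ ≤ _ := by
      refine mul_le_mul_of_nonneg_right ?_ hI
      nlinarith

/-- smoothing lemma: for `f ∈ L²((0,T), H³ ∩ H¹₀)`, the function
`G(t) = ∫₀ᵗ e^{iAs} f(s) ds` belongs to `C⁰([0,T], H³₍₀₎)` — expressed through the
eigencoefficients: `‖G(t)‖²_{H³₍₀₎} = ∑ ((n+1)π)⁶ ‖coefG n t‖²` is finite,
bounded by `c₁(T)² ‖f‖²_{L²((0,T),H³∩H¹₀)}`, and continuous in `t` in the `H³₍₀₎` sense,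
with `c₁` monotone (hence uniformly bounded on bounded intervals of `T`). -/
theorem stmt_19 :
    ∃ c : ℝ → ℝ, (∀ T, 0 < c T) ∧ Monotone c ∧
      ∀ (T : ℝ), 0 < T → ∀ (f D1 D2 D3 : ℝ → ℝ → ℂ),
        (∀ s ∈ Set.Icc (0:ℝ) T, ∀ x ∈ Set.Icc (0:ℝ) 1,
          HasDerivAt (f s) (D1 s x) x ∧ HasDerivAt (D1 s) (D2 s x) x ∧
          HasDerivAt (D2 s) (D3 s x) x) →
        (∀ s ∈ Set.Icc (0:ℝ) T,
          ContinuousOn (D3 s) (Set.Icc 0 1) ∧ f s 0 = 0 ∧ f s 1 = 0) →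
        (∀ n : ℕ, IntervalIntegrable (coefA f n) MeasureTheory.volume 0 T) →
        IntervalIntegrable (sobNormSq f D1 D2 D3) MeasureTheory.volume 0 T →
        (∀ t ∈ Set.Icc (0:ℝ) T,
          Summable (fun n : ℕ => (((n : ℝ) + 1) * Real.pi) ^ 6 * ‖coefG f n t‖ ^ 2)) ∧
        (∀ t ∈ Set.Icc (0:ℝ) T,
          (∑' n : ℕ, (((n : ℝ) + 1) * Real.pi) ^ 6 * ‖coefG f n t‖ ^ 2) ≤
            (c T) ^ 2 * ∫ s in (0:ℝ)..T, sobNormSq f D1 D2 D3 s) ∧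
        (∀ t ∈ Set.Icc (0:ℝ) T, ∀ ε : ℝ, 0 < ε → ∃ δ : ℝ, 0 < δ ∧
          ∀ t' ∈ Set.Icc (0:ℝ) T, |t' - t| < δ →
            (∑' n : ℕ, (((n : ℝ) + 1) * Real.pi) ^ 6 *
              ‖coefG f n t' - coefG f n t‖ ^ 2) < ε) := by
  refine ⟨fun T => 6 * (2 * (⌈T⌉₊ : ℝ) + 1), fun T => by positivity, ?_, ?_⟩
  · intro x y hxy
    have : (⌈x⌉₊ : ℝ) ≤ ⌈y⌉₊ := by exact_mod_cast Nat.ceil_mono hxy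
    simp only
    linarith
  intro T hT f D1 D2 D3 hd hc hA hS
  have main := fun {a b : ℝ} (ha : 0 ≤ a) (hab : a ≤ b) (hb : b ≤ T) (N : ℕ) =>
    aux_main f D1 D2 D3 hd hc hA hS ha hab hb N
  have hSn : ∀ s, 0 ≤ sobNormSq f D1 D2 D3 s := fun s =>
    intervalIntegral.integral_nonneg zero_le_one fun x _ => by positivity
  have hmono : ∀ t ∈ Icc (0:ℝ) T, ∫ s in (0:ℝ)..t, sobNormSq f D1 D2 D3 s ≤
      ∫ s in (0:ℝ)..T, sobNormSq f D1 D2 D3 s := fun t ht =>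
    intervalIntegral.integral_mono_interval le_rfl ht.1 ht.2
      (Filter.Eventually.of_forall hSn) hS
  refine ⟨fun t ht => summable_of_sum_range_le (fun n => by positivity) (main le_rfl ht.1 ht.2),
    fun t ht => ?_, ?_⟩
  · refine (Real.tsum_le_of_sum_range_le (fun n => by positivity) (main le_rfl ht.1 ht.2)).trans ?_
    exact mul_le_mul_of_nonneg_left (hmono t ht) (sq_nonneg _)
  intro t ht ε hε
  set K : ℝ := (6 * (2 * (⌈T⌉₊ : ℝ) + 1)) ^ 2 with hK
  have hKpos : 0 < K := by positivity
  set F : ℝ → ℝ := fun t => ∫ s in (0:ℝ)..t, sobNormSq f D1 D2 D3 s with hF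
  have hFc : ContinuousOn F (Icc 0 T) := by
    have := intervalIntegral.continuousOn_primitive_interval (μ := volume)
      (f := sobNormSq f D1 D2 D3) (a := 0) (b := T) (by
        rw [uIcc_of_le hT.le]
        exact (intervalIntegrable_iff_integrableOn_Icc_of_le hT.le).1 hS)
    rwa [uIcc_of_le hT.le] at this
  have hsubii : ∀ {g : ℝ → ℝ}, IntervalIntegrable g volume 0 T → ∀ {a b : ℝ}, a ∈ Icc 0 T →
      b ∈ Icc 0 T → IntervalIntegrable g volume a b := by
    intro g hg a b ha hb
    apply hg.mono_set
    rw [uIcc_of_le hT.le]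
    exact uIcc_subset_Icc ha hb
  have hsubii' : ∀ {g : ℝ → ℂ}, IntervalIntegrable g volume 0 T → ∀ {a b : ℝ}, a ∈ Icc 0 T →
      b ∈ Icc 0 T → IntervalIntegrable g volume a b := by
    intro g hg a b ha hb
    apply hg.mono_set
    rw [uIcc_of_le hT.le]
    exact uIcc_subset_Icc ha hb
  have h0 : (0:ℝ) ∈ Icc 0 T := ⟨le_rfl, hT.le⟩
  have diff : ∀ a ∈ Icc (0:ℝ) T, ∀ b ∈ Icc (0:ℝ) T, a ≤ b →
      (∑' n : ℕ, (((n : ℝ) + 1) * Real.pi) ^ 6 * ‖coefG f n b - coefG f n a‖ ^ 2) ≤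
        K * (F b - F a) := by
    intro a ha b hb hab
    have e1 : F b - F a = ∫ s in a..b, sobNormSq f D1 D2 D3 s :=
      intervalIntegral.integral_interval_sub_left (hsubii hS h0 hb) (hsubii hS h0 ha)
    have e2 : ∀ n, coefG f n b - coefG f n a = ∫ s in a..b,
        Complex.exp (Complex.I * (((n : ℝ) + 1) ^ 2 * Real.pi ^ 2 * s)) * coefA f n s := by
      intro n
      have hi : IntervalIntegrable (fun s : ℝ =>
        Complex.exp (Complex.I * (((n : ℝ) + 1) ^ 2 * Real.pi ^ 2 * s)) * coefA f n s) volume 0 T :=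
        (hA n).continuousOn_mul (by fun_prop)
      exact intervalIntegral.integral_interval_sub_left (hsubii' hi h0 hb) (hsubii' hi h0 ha)
    rw [e1]
    simp_rw [e2]
    exact Real.tsum_le_of_sum_range_le (fun n => by positivity) (main ha.1 hab hb.2)
  obtain ⟨δ, hδ, H⟩ := Metric.continuousOn_iff.1 hFc t ht (ε / K) (by positivity)
  refine ⟨δ, hδ, fun t' ht' htt => ?_⟩
  have h1 := H t' ht' (by rwa [Real.dist_eq])
  rw [Real.dist_eq, lt_div_iff₀ hKpos, mul_comm] at h1
  refine lt_of_le_of_lt ?_ h1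
  rcases le_total t t' with h | h
  · refine (diff t ht t' ht' h).trans ?_
    exact mul_le_mul_of_nonneg_left (le_abs_self _) hKpos.le
  · simp_rw [norm_sub_rev (coefG f _ t')]
    refine (diff t' ht' t ht h).trans ?_
    rw [abs_sub_comm]
    exact mul_le_mul_of_nonneg_left (le_abs_self _) hKpos.le
end
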